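/- arXiv:2404.17678 — 3 statements merged into one kernel-verified Lean document; each statement's English description precedes it below -/
import Mathlib

section
/- Let q be a prime power with q ≡ 1 (mod 4), let χ_4 be a multiplicative character of F_q^* of order 4, and let C be a multiplicative character of F_q^* with C^4 ≠ ε. Then _3F_3(φ, φC, φC̄; ε, C̄, C | −1)_q = C(−1) · (1 + E), where E = 0 if χ_4 C is not the square of any multiplicative character of F_q^*, and otherwise E = Σ_{D: D^2 = χ_4 C} g(D) g(χ_4 D) / ( g(φD) g(χ̄_4 D) ), the sum being over multiplicative characters D with D^2 = χ_4 C. -/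
/-- The finite field hypergeometric function `ₘFₘ` of McCarthy, with upper parameters `A`,
lower parameters `B` (indexed by a finite type `ι`), and argument `lam`. -/
noncomputable def ffHyp {F : Type} [Field F] [Fintype F] (θ : AddChar F ℂ)
    {ι : Type} [Fintype ι] (A B : ι → MulChar F ℂ) (lam : F) : ℂ :=
  letI : Fintype (MulChar F ℂ) := Fintype.ofFinite _
  (-1 : ℂ) / ((Fintype.card F : ℂ) - 1) *
    ∑ χ : MulChar F ℂ,
      (∏ i, (gaussSum (A i * χ) θ / gaussSum (A i) θ) *
        (gaussSum ((B i * χ)⁻¹) θ / gaussSum ((B i)⁻¹) θ)) *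
      χ (-1) ^ (Fintype.card ι) * χ lam

section helpers
open scoped Classical
open Finset
set_option linter.unusedSectionVars false

variable {F : Type} [Field F] [Fintype F]

lemma hp_orth [Fintype (MulChar F ℂ)] (a : F) :
    ∑ χ : MulChar F ℂ, χ a = if a = 1 then ((Fintype.card F : ℂ) - 1) else 0 := by
  split_ifs with ha
  · subst ha
    have h := MulChar.card_eq_card_units_of_hasEnoughRootsOfUnity F ℂ
    have h2 : Nat.card Fˣ = Fintype.card F - 1 := by
      rw [Nat.card_eq_fintype_card, Fintype.card_units]
    simp only [map_one, sum_const, card_univ, nsmul_eq_mul, mul_one]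
    rw [← Nat.card_eq_fintype_card, h, h2, Nat.cast_sub Fintype.card_pos]
    simp
  · obtain ⟨χ, hχ⟩ := MulChar.exists_apply_ne_one_of_hasEnoughRootsOfUnity F ℂ ha
    refine eq_zero_of_mul_eq_self_left hχ ?_
    simp only [Finset.mul_sum, ← MulChar.mul_apply]
    exact Fintype.sum_bijective _ (Group.mulLeft_bijective χ) _ _ fun χ' ↦ rfl

lemma hp_sum_mulChar (χ : MulChar F ℂ) :
    ∑ a, χ a = if χ = 1 then ((Fintype.card F : ℂ) - 1) else 0 := by
  split_ifs with h
  · subst h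
    rw [MulChar.sum_one_eq_card_units, Fintype.card_units, Nat.cast_sub Fintype.card_pos]
    simp
  · exact MulChar.sum_eq_zero_of_ne_one h

lemma hp_gen (g : Fˣ) (hg : ∀ x, x ∈ Subgroup.zpowers g) (φ : MulChar F ℂ) (h2 : φ ^ 2 = 1)
    (h1 : φ ≠ 1) : φ g = -1 := by
  have h : φ g ^ 2 = 1 := by
    rw [← MulChar.pow_apply_coe, h2, MulChar.one_apply_coe]
  rcases mul_self_eq_one_iff.mp ((pow_two (φ g)).symm.trans h) with h | h
  · exact absurd ((MulChar.eq_iff hg φ 1).mpr (by rw [h, MulChar.one_apply_coe])) h1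
  · exact h

lemma hp_unique (φ ψ : MulChar F ℂ) (h2 : φ ^ 2 = 1) (h1 : φ ≠ 1) (h2' : ψ ^ 2 = 1)
    (h1' : ψ ≠ 1) : φ = ψ := by
  obtain ⟨g, hg⟩ := IsCyclic.exists_generator (α := Fˣ)
  rw [MulChar.eq_iff hg, hp_gen g hg φ h2 h1, hp_gen g hg ψ h2' h1']

lemma hp_card_sqrts (hF : ringChar F ≠ 2) (φ : MulChar F ℂ) (h2 : φ ^ 2 = 1) (h1 : φ ≠ 1) (a : F) :
    ∑ s : F, (if s ^ 2 = a then (1 : ℂ) else 0) = 1 + φ a := by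
  have hinj : Function.Injective (Int.castRingHom ℂ) := Int.cast_injective
  have hφ : φ = (quadraticChar F).ringHomComp (Int.castRingHom ℂ) := by
    apply hp_unique _ _ h2 h1
    · rw [MulChar.ringHomComp_pow, MulChar.IsQuadratic.sq_eq_one (quadraticChar_isQuadratic F)]
      simp
    · rw [MulChar.ringHomComp_ne_one_iff hinj]
      exact quadraticChar_ne_one hF
  have := quadraticChar_card_sqrts hF a
  rw [hφ, MulChar.ringHomComp_apply, ← sum_filter, sum_const, nsmul_eq_mul, mul_one]
  have h := congrArg (Int.cast : ℤ → ℂ) this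
  push_cast at h
  rw [add_comm] at h
  simp only [eq_intCast]
  rw [← h]
  congr 2
  ext; simp

/-- Pushforward along squaring. -/
lemma hp_sum_sq (hF : ringChar F ≠ 2) (φ : MulChar F ℂ) (h2 : φ ^ 2 = 1) (h1 : φ ≠ 1)
    (G : F → ℂ) : ∑ s, G (s ^ 2) = ∑ x, G x * (1 + φ x) := by
  simp_rw [← hp_card_sqrts hF φ h2 h1, mul_sum]
  rw [sum_comm]
  simp

lemma hp_sum_div (hF : ringChar F ≠ 2) (φ : MulChar F ℂ) (h2 : φ ^ 2 = 1) (h1 : φ ≠ 1)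
    (t : F) (ht : t ≠ 0) (G : F → ℂ) :
    ∑ w, (if w = 0 then 0 else G (t * w + w⁻¹)) = ∑ z, G z * (1 + φ (z ^ 2 - 4 * t)) := by
  have htwo : (2 : F) ≠ 0 := Ring.two_ne_zero hF
  have key : ∀ z, 1 + φ (z ^ 2 - 4 * t) = ∑ w : F, if w ≠ 0 ∧ t * w + w⁻¹ = z then (1 : ℂ) else 0 := by
    intro z
    rw [← hp_card_sqrts hF φ h2 h1]
    let e : F ≃ F := (Equiv.mulLeft₀ (2 * t) (mul_ne_zero htwo ht)).trans (Equiv.subRight z)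
    rw [← e.sum_comp]
    apply sum_congr rfl
    intro w _
    have : (e w ^ 2 = z ^ 2 - 4 * t) ↔ (w ≠ 0 ∧ t * w + w⁻¹ = z) := by
      show ((2 * t * w - z) ^ 2 = z ^ 2 - 4 * t) ↔ _
      have h4 : (4 * t : F) ≠ 0 := by
        have : (4 : F) = 2 * 2 := by norm_num
        rw [this]; exact mul_ne_zero (mul_ne_zero htwo htwo) ht
      constructor
      · intro h
        have h' : 4 * t * (t * w ^ 2 - z * w + 1) = 0 := by linear_combination h
        have h'' := (mul_eq_zero.mp h').resolve_left h4
        have hw : w ≠ 0 := by rintro rfl; simp at h''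
        refine ⟨hw, ?_⟩
        field_simp
        linear_combination h''
      · rintro ⟨hw, h⟩
        rw [← h]; field_simp; ring
    simp only [this]
  simp_rw [key, mul_sum]
  rw [sum_comm]
  apply sum_congr rfl
  intro w _
  by_cases hw : w = 0 <;> simp [hw]

lemma hp_phi_sq (φ : MulChar F ℂ) (h2 : φ ^ 2 = 1) (b : F) (hb : b ≠ 0) : φ b * φ b = 1 := by
  rw [← pow_two, ← MulChar.pow_apply' _ two_ne_zero, h2, MulChar.one_apply (Ne.isUnit hb)]

lemma hp_phi_inv (φ : MulChar F ℂ) (h2 : φ ^ 2 = 1) (b : F) : φ b⁻¹ = φ b := by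
  rw [← MulChar.inv_apply', inv_eq_of_mul_eq_one_right (by rw [← pow_two]; exact h2)]

/-- absorbing squares -/
lemma hp_absorb (φ : MulChar F ℂ) (h2 : φ ^ 2 = 1) {a b : F} (c : F) (hc : c ≠ 0)
    (h : a = b * c ^ 2) : φ a = φ b := by
  rw [h, map_mul, map_pow, pow_two, hp_phi_sq φ h2 c hc, mul_one]

lemma hp_sum_quad (φ : MulChar F ℂ) (h2 : φ ^ 2 = 1) (h1 : φ ≠ 1) (a : F) :
    ∑ z, φ (z * (z + a)) = if a = 0 then ((Fintype.card F : ℂ) - 1) else -1 := by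
  split_ifs with ha
  · subst ha
    have h0 := hp_sum_mulChar (1 : MulChar F ℂ)
    rw [if_pos rfl] at h0
    rw [← h0]
    apply sum_congr rfl
    intro z _
    rw [← h2, MulChar.pow_apply' _ two_ne_zero, add_zero, map_mul, pow_two]
  · have hs : ∑ z, φ z = 0 := MulChar.sum_eq_zero_of_ne_one h1
    let e : F ≃ F := (Equiv.mulLeft₀ a ha).trans (Equiv.addRight 1)
    have h3 : ∑ z, φ (1 + a * z) = 0 := by
      rw [← hs, ← e.sum_comp φ]
      apply sum_congr rfl
      intro z _
      simp [e, add_comm]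
    have h4 : ∑ z, φ (1 + a * z⁻¹) = 0 := by
      rw [← h3]; exact Equiv.sum_comp (Equiv.inv F) (fun z => φ (1 + a * z))
    have h5 : ∀ z, φ (z * (z + a)) = φ (1 + a * z⁻¹) - if z = 0 then 1 else 0 := by
      intro z
      by_cases hz : z = 0
      · simp [hz, MulChar.map_zero]
      · simp only [hz, if_false, sub_zero]
        apply hp_absorb φ h2 z hz
        field_simp
    simp_rw [h5, sum_sub_distrib, h4]
    simp

/-- sum over square roots of characters -/
lemma hp_char_sqrts [Fintype (MulChar F ℂ)] (ψ : MulChar F ℂ) (x : F) (hx : x ≠ 0) :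
    ∑ D ∈ univ.filter (fun D : MulChar F ℂ => D ^ 2 = ψ), D x =
      ∑ y, if y ^ 2 = x then ψ y else 0 := by
  have hq : (Fintype.card F : ℂ) - 1 ≠ 0 := by
    rw [sub_ne_zero]
    exact_mod_cast (Fintype.one_lt_card (α := F)).ne'
  apply mul_left_cancel₀ hq
  have h1 : ∀ D : MulChar F ℂ, (if D ^ 2 = ψ then (Fintype.card F : ℂ) - 1 else 0) =
      ∑ y, (ψ * (D ^ 2)⁻¹) y := by
    intro D
    rw [hp_sum_mulChar]
    simp only [mul_inv_eq_one, eq_comm]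
  rw [sum_filter, mul_sum, mul_sum]
  have h2 : ∀ D : MulChar F ℂ, ((Fintype.card F : ℂ) - 1) * (if D ^ 2 = ψ then D x else 0) =
      ∑ y, (ψ * (D ^ 2)⁻¹) y * D x := by
    intro D
    rw [← sum_mul, ← h1]
    split_ifs <;> simp
  simp_rw [h2]
  rw [sum_comm]
  apply sum_congr rfl
  intro y _
  by_cases hy : y = 0
  · simp [hy, MulChar.map_zero, hx.symm]
  have h3 : ∀ D : MulChar F ℂ, (ψ * (D ^ 2)⁻¹) y * D x = ψ y * D (x * (y ^ 2)⁻¹) := by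
    intro D
    rw [MulChar.mul_apply, MulChar.inv_apply', MulChar.pow_apply' _ two_ne_zero, map_mul,
      ← map_pow, inv_pow]
    ring
  simp_rw [h3, ← mul_sum, hp_orth]
  have : x * (y ^ 2)⁻¹ = 1 ↔ y ^ 2 = x := by
    rw [mul_inv_eq_one₀ (pow_ne_zero 2 hy), eq_comm]
  simp only [this]
  split_ifs <;> ring

/-- product of Gauss sums as Mellin transform -/
lemma hp_mellin (θ : AddChar F ℂ) (φ : MulChar F ℂ) (h2 : φ ^ 2 = 1) (h1 : φ ≠ 1)
    (χ : MulChar F ℂ) :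
    gaussSum (φ * χ) θ * gaussSum χ⁻¹ θ = gaussSum φ θ * ∑ u, φ (u * (1 + u)) * χ u := by
  have h := jacobiSum_mul_nontrivial (χ := φ * χ) (φ := χ⁻¹) (by simpa using h1) θ
  rw [← h, mul_inv_cancel_right]
  congr 1
  rw [jacobiSum]
  have hl : ∑ x, (φ * χ) x * χ⁻¹ (1 - x) = ∑ x ∈ univ.filter (fun x : F => x ≠ 1),
      (φ * χ) x * χ⁻¹ (1 - x) := by
    rw [sum_filter]
    apply sum_congr rfl
    intro x _
    by_cases hx : x = 1 <;> simp [hx, MulChar.map_zero]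
  have hr : ∑ u, φ (u * (1 + u)) * χ u = ∑ u ∈ univ.filter (fun x : F => x ≠ -1),
      φ (u * (1 + u)) * χ u := by
    rw [sum_filter]
    apply sum_congr rfl
    intro x _
    by_cases hx : x = -1 <;> simp [hx, MulChar.map_zero]
  rw [hl, hr]
  have e1 : ∀ x : F, x ≠ 1 → 1 - x ≠ 0 := fun x hx => sub_ne_zero.mpr (Ne.symm hx)
  have e2 : ∀ x : F, x ≠ -1 → 1 + x ≠ 0 := fun x hx h => hx (by linear_combination h)
  refine sum_nbij' (fun x => x / (1 - x)) (fun u => u / (1 + u)) ?_ ?_ ?_ ?_ ?_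
  · intro x hx
    simp only [mem_filter, mem_univ, true_and] at hx ⊢
    intro h
    have := e1 x hx
    rw [div_eq_iff this] at h
    exact one_ne_zero (α := F) (by linear_combination h)
  · intro x hx
    simp only [mem_filter, mem_univ, true_and] at hx ⊢
    intro h
    have := e2 x hx
    rw [div_eq_iff this] at h
    exact one_ne_zero (α := F) (by linear_combination -h)
  · intro x hx
    simp only [mem_filter, mem_univ, true_and] at hx
    have := e1 x hx
    have h3 : 1 + x / (1 - x) = 1 / (1 - x) := by field_simp; ring
    rw [h3]; field_simp
  · intro x hx
    simp only [mem_filter, mem_univ, true_and] at hx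
    have := e2 x hx
    have h3 : 1 - x / (1 + x) = 1 / (1 + x) := by field_simp; ring
    rw [h3]; field_simp
  · intro x hx
    simp only [mem_filter, mem_univ, true_and] at hx
    have := e1 x hx
    have h3 : 1 + x / (1 - x) = 1 / (1 - x) := by field_simp; ring
    rw [MulChar.mul_apply, MulChar.inv_apply', div_eq_mul_inv x, map_mul χ, mul_assoc,
      hp_absorb φ h2 (1 - x) this (a := x) (b := x * (1 - x)⁻¹ * (1 + x * (1 - x)⁻¹))]
    rw [← div_eq_mul_inv, h3]
    field_simp

lemma hp_sum_inv (G : F → ℂ) : ∑ x, G x⁻¹ = ∑ x, G x :=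
  Equiv.sum_comp (Equiv.inv F) G

lemma hp_sum_neg (G : F → ℂ) : ∑ x, G (-x) = ∑ x, G x :=
  Equiv.sum_comp (Equiv.neg F) G

lemma hp_sum_add (G : F → ℂ) (a : F) : ∑ x, G (x + a) = ∑ x, G x :=
  Equiv.sum_comp (Equiv.addRight a) G

lemma hp_sum_mul (a : F) (ha : a ≠ 0) (G : F → ℂ) : ∑ x, G (x * a) = ∑ x, G x :=
  Equiv.sum_comp (Equiv.mulRight₀ a ha) G

lemma hp_T (hF : ringChar F ≠ 2) (φ : MulChar F ℂ) (h2 : φ ^ 2 = 1) (h1 : φ ≠ 1)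
    (C : MulChar F ℂ) :
    ∑ v, ∑ w, φ ((v * w)⁻¹ * (1 + (v * w)⁻¹)) * φ (v * (1 + v)) * φ (w * (1 + w)) * C v * C⁻¹ w =
      ∑ t, (φ * C) t * ∑ z, φ (z * (z + (1 + t))) * (1 + φ (z ^ 2 - 4 * t)) := by
  rw [sum_comm]
  have step : ∀ w : F, ∑ v, φ ((v * w)⁻¹ * (1 + (v * w)⁻¹)) * φ (v * (1 + v)) * φ (w * (1 + w)) *
      C v * C⁻¹ w = ∑ t, (φ * C) t * (if w = 0 then 0 else
        φ ((t * w + w⁻¹) * ((t * w + w⁻¹) + (1 + t)))) := by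
    intro w
    by_cases hw : w = 0
    · subst hw; simp [MulChar.map_zero]
    rw [← hp_sum_mul w hw]
    apply sum_congr rfl
    intro t _
    by_cases ht : t = 0
    · subst ht; simp [MulChar.map_zero]
    rw [if_neg hw, MulChar.inv_apply', MulChar.mul_apply]
    have e1 : C (t * w) * C w⁻¹ = C t := by
      rw [← map_mul]; congr 1; field_simp
    rw [mul_assoc _ (C (t * w)), e1, mul_right_comm (φ t), ← map_mul, ← map_mul, ← map_mul]
    congr 1
    apply hp_absorb φ h2 t⁻¹ (inv_ne_zero ht)
    field_simp
    ring
  simp_rw [step]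
  rw [sum_comm]
  apply sum_congr rfl
  intro t _
  by_cases ht : t = 0
  · subst ht; simp [MulChar.map_zero]
  rw [← mul_sum, hp_sum_div hF φ h2 h1 t ht (fun z => φ (z * (z + (1 + t))))]

lemma hp_T1 (φ : MulChar F ℂ) (h2 : φ ^ 2 = 1) (h1 : φ ≠ 1) (hm : φ (-1) = 1)
    (C : MulChar F ℂ) (hC : φ * C ≠ 1) :
    ∑ t, (φ * C) t * ∑ z, φ (z * (z + (1 + t))) = (Fintype.card F : ℂ) * C (-1) := by
  have h : ∀ t : F, (φ * C) t * ∑ z, φ (z * (z + (1 + t))) =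
      (if t = -1 then (Fintype.card F : ℂ) * C (-1) else 0) - (φ * C) t := by
    intro t
    rw [hp_sum_quad φ h2 h1]
    have : 1 + t = 0 ↔ t = -1 := by
      constructor <;> intro h <;> linear_combination h
    simp only [this]
    split_ifs with h
    · subst h; rw [MulChar.mul_apply, hm]; ring
    · ring
  simp_rw [h, sum_sub_distrib, MulChar.sum_eq_zero_of_ne_one hC]
  simp

lemma hp_inner (hF : ringChar F ≠ 2) (φ : MulChar F ℂ) (h2 : φ ^ 2 = 1) (h1 : φ ≠ 1)
    (i : F) (hi : i ^ 2 = -1) (t : F) :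
    ∑ z, φ (z * (z + (1 + t))) * φ (z ^ 2 - 4 * t) =
      φ 2 * (∑ m, φ (m + 2) * φ ((1 + t) ^ 2 - t * m ^ 2)) - 1 := by
  have htwo : (2 : F) ≠ 0 := Ring.two_ne_zero hF
  have hi0 : i ≠ 0 := by rintro rfl; simp at hi
  have h22 := hp_phi_sq φ h2 2 htwo
  have hs : ∑ z, φ z = 0 := MulChar.sum_eq_zero_of_ne_one h1
  by_cases ht : 1 + t = 0
  · have ht' : t = -1 := by linear_combination ht
    subst ht'
    have hL : ∀ z : F, φ (z * (z + (1 + -1))) * φ (z ^ 2 - 4 * -1) =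
        φ (z ^ 2 + 4) - if z = 0 then 1 else 0 := by
      intro z
      by_cases hz : z = 0
      · subst hz
        have : φ 4 = 1 := by
          rw [show (4 : F) = 2 * 2 by norm_num, map_mul, h22]
        simp [MulChar.map_zero, this]
      · simp only [add_neg_cancel, add_zero, map_mul, hp_phi_sq φ h2 z hz, hz, if_false]
        rw [one_mul, sub_zero]; congr 1; ring
    have hR : ∀ m : F, φ (m + 2) * φ ((1 + -1) ^ 2 - -1 * m ^ 2) =
        φ (m + 2) - if m = 0 then φ 2 else 0 := by
      intro m
      by_cases hz : m = 0
      · subst hz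
        simp [MulChar.map_zero]
      · have : (1 + -1) ^ 2 - -1 * m ^ 2 = m * m := by ring
        rw [this, map_mul, hp_phi_sq φ h2 m hz, if_neg hz]; ring
    simp_rw [hL, hR, sum_sub_distrib, hp_sum_add (fun z => φ z), hs]
    have h4 : ∑ z, φ (z ^ 2 + 4) = -1 := by
      have h := hp_sum_quad φ h2 h1 (4 * i)
      have hne : 4 * i ≠ 0 := by
        rw [show (4 : F) = 2 * 2 by norm_num]
        exact mul_ne_zero (mul_ne_zero htwo htwo) hi0
      rw [if_neg hne, ← hp_sum_add _ (-2 * i)] at h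
      rw [← h]
      apply sum_congr rfl
      intro z _
      congr 1
      linear_combination 4 * hi
    rw [h4]
    simp only [sum_ite_eq', mem_univ, if_true]
    linear_combination h22
  · have hL : ∀ z : F, φ (z * (z + (1 + t))) * φ (z ^ 2 - 4 * t) =
        φ (1 + (1 + t) * z⁻¹) * φ (1 - 4 * t * (z⁻¹) ^ 2) - if z = 0 then 1 else 0 := by
      intro z
      by_cases hz : z = 0
      · subst hz; simp [MulChar.map_zero]
      · rw [if_neg hz, sub_zero, ← map_mul, ← map_mul]
        apply hp_absorb φ h2 (z ^ 2) (pow_ne_zero 2 hz)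
        field_simp
    simp_rw [hL, sum_sub_distrib]
    rw [hp_sum_inv (fun k => φ (1 + (1 + t) * k) * φ (1 - 4 * t * k ^ 2))]
    simp only [sum_ite_eq', mem_univ, if_true]
    congr 1
    rw [mul_sum, ← hp_sum_mul (2 * (1 + t)) (mul_ne_zero htwo ht)
      (fun m => φ 2 * (φ (m + 2) * φ ((1 + t) ^ 2 - t * m ^ 2)))]
    apply sum_congr rfl
    intro k _
    rw [← map_mul, ← map_mul, ← map_mul]
    symm
    apply hp_absorb φ h2 (2 * (1 + t)) (mul_ne_zero htwo ht)
    ring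

lemma hp_K (hF : ringChar F ≠ 2) (φ : MulChar F ℂ) (h2 : φ ^ 2 = 1) (h1 : φ ≠ 1)
    (hm : φ (-1) = 1) (χ₄ : MulChar F ℂ) (h4 : χ₄ ^ 2 = φ) (y : F) :
    ∑ x, χ₄ x * φ ((x - y) * (1 - x * y)) =
      ∑ m, φ (m + 2) * φ ((1 + y) ^ 2 - y * m ^ 2) := by
  have htwo : (2 : F) ≠ 0 := Ring.two_ne_zero hF
  have h22 := hp_phi_sq φ h2 2 htwo
  have hinv : χ₄⁻¹ = χ₄ * φ := by
    rw [inv_eq_iff_mul_eq_one, ← h2, ← h4]; group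
  have a1 : ∑ x, χ₄ x * φ ((x - y) * (1 - x * y)) =
      ∑ x, χ₄ x * φ ((x - y) * (1 - x * y)) * φ x := by
    rw [← hp_sum_inv]
    apply sum_congr rfl
    intro x _
    by_cases hx : x = 0
    · subst hx; simp [MulChar.map_zero]
    rw [← MulChar.inv_apply', hinv, MulChar.mul_apply, mul_right_comm]
    congr 2
    symm
    apply hp_absorb φ h2 x hx
    field_simp
  have a2 : 2 * ∑ x, χ₄ x * φ ((x - y) * (1 - x * y)) =
      ∑ s, φ s * φ ((s ^ 2 - y) * (1 - s ^ 2 * y)) := by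
    have := hp_sum_sq hF φ h2 h1 (fun x => χ₄ x * φ ((x - y) * (1 - x * y)))
    simp only [map_pow χ₄, ← MulChar.pow_apply' χ₄ two_ne_zero, h4] at this
    rw [this]
    simp_rw [mul_add, sum_add_distrib, mul_one]
    rw [← a1]; ring
  let G : F → ℂ := fun m => φ ((1 + y) ^ 2 - y * m ^ 2)
  have a3 : ∀ s, φ s * φ ((s ^ 2 - y) * (1 - s ^ 2 * y)) =
      (if s = 0 then 0 else (fun m => φ (m + 2) * G m) (1 * s + s⁻¹)) +
      if s = -1 then G (-2) else 0 := by
    intro s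
    by_cases hs : s = 0
    · subst hs; simp [MulChar.map_zero]
    have b1 : φ ((s ^ 2 - y) * (1 - s ^ 2 * y)) = G (1 * s + s⁻¹) := by
      apply hp_absorb φ h2 s hs
      field_simp
      ring
    rw [b1, if_neg hs]
    by_cases hs1 : s = -1
    · subst hs1
      have : (1 * -1 + (-1)⁻¹ : F) = -2 := by norm_num
      simp only [this]
      simp [MulChar.map_zero, hm]
    · rw [if_neg hs1, add_zero]
      have hs2 : s + 1 ≠ 0 := fun h => hs1 (by linear_combination h)
      have : φ s = φ (1 * s + s⁻¹ + 2) := by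
        symm
        apply hp_absorb φ h2 ((s + 1) * s⁻¹) (mul_ne_zero hs2 (inv_ne_zero hs))
        field_simp
        ring
      simp only [this]
  have a4 : ∀ m : F, φ (m + 2) * G m * (1 + φ (m ^ 2 - 4 * 1)) =
      φ (m + 2) * G m + φ (m - 2) * G m - if m = -2 then G (-2) else 0 := by
    intro m
    by_cases hm2 : m = -2
    · subst hm2
      have : φ (-2 - 2) = 1 := by
        rw [show (-2 - 2 : F) = -1 * (2 * 2) by norm_num, map_mul, map_mul, h22, hm, one_mul]
      simp [this, MulChar.map_zero]
    · have hs2 : m + 2 ≠ 0 := fun h => hm2 (by linear_combination h)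
      have : m ^ 2 - 4 * 1 = (m + 2) * (m - 2) := by ring
      rw [this, map_mul, if_neg hm2]
      linear_combination (G m * φ (m - 2)) * hp_phi_sq φ h2 _ hs2
  have a5 : ∑ m, φ (m - 2) * G m = ∑ m, φ (m + 2) * G m := by
    rw [← hp_sum_neg]
    apply sum_congr rfl
    intro m _
    have : -m - 2 = -1 * (m + 2) := by ring
    rw [this, map_mul, hm, one_mul]
    simp only [G, neg_sq]
  have a6 : 2 * ∑ x, χ₄ x * φ ((x - y) * (1 - x * y)) = 2 * ∑ m, φ (m + 2) * G m := by
    rw [a2]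
    simp_rw [a3]
    rw [sum_add_distrib, hp_sum_div hF φ h2 h1 1 one_ne_zero (fun m => φ (m + 2) * G m)]
    simp_rw [a4]
    rw [sum_sub_distrib, sum_add_distrib, a5]
    simp only [sum_ite_eq', mem_univ, if_true]
    ring
  exact mul_left_cancel₀ two_ne_zero a6

lemma hp_gg (θ : AddChar F ℂ) (hθ : θ ≠ 1) (χ : MulChar F ℂ) (hχ : χ ≠ 1) :
    gaussSum χ θ * gaussSum χ⁻¹ θ = χ (-1) * (Fintype.card F : ℂ) := by
  have h := gaussSum_mul_gaussSum_eq_card hχ (AddChar.IsPrimitive.of_ne_one hθ)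
  have h' := mul_gaussSum_inv_eq_gaussSum χ⁻¹ θ
  rw [MulChar.inv_apply', inv_neg_one] at h'
  rw [← h', ← h]; ring

lemma hp_neg_one_sq (χ : MulChar F ℂ) : χ (-1) * χ (-1) = 1 := by
  rw [← map_mul]; simp

lemma hp_term (θ : AddChar F ℂ) (hθ : θ ≠ 1) (φ : MulChar F ℂ) (h2 : φ ^ 2 = 1) (h1 : φ ≠ 1)
    (hm : φ (-1) = 1) (χ₄ : MulChar F ℂ) (h4 : χ₄ ^ 2 = φ) (D : MulChar F ℂ)
    (hD : D ^ 8 ≠ 1) :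
    gaussSum D θ * gaussSum (χ₄ * D) θ / (gaussSum (φ * D) θ * gaussSum (χ₄⁻¹ * D) θ) =
      χ₄ (-1) / (Fintype.card F : ℂ) * ((∑ u, φ (u * (1 + u)) * D⁻¹ u) *
        ∑ v, φ (v * (1 + v)) * (χ₄⁻¹ * D⁻¹) v) := by
  have hq : (Fintype.card F : ℂ) ≠ 0 := by
    exact_mod_cast Fintype.card_ne_zero
  have hφi : φ⁻¹ = φ := inv_eq_of_mul_eq_one_right (by rw [← pow_two]; exact h2)
  have h48 : χ₄ ^ 8 = 1 := by
    have : χ₄ ^ 8 = ((χ₄ ^ 2) ^ 2) ^ 2 := by rw [← pow_mul, ← pow_mul]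
    rw [this, h4, h2, one_pow]
  have hφ8 : φ ^ 8 = 1 := by
    have : φ ^ 8 = (φ ^ 2) ^ 4 := by rw [← pow_mul]
    rw [this, h2, one_pow]
  have n1 : φ * D ≠ 1 := by
    intro h
    apply hD
    have := congrArg (· ^ 8) h
    simpa [mul_pow, hφ8] using this
  have n2 : χ₄⁻¹ * D ≠ 1 := by
    intro h
    apply hD
    have := congrArg (· ^ 8) h
    simpa [mul_pow, h48] using this
  have g0 := hp_gg θ hθ φ h1
  rw [hφi, hm, one_mul] at g0
  have g1 := hp_gg θ hθ _ n1
  have g2 := hp_gg θ hθ _ n2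
  rw [mul_inv, hφi, MulChar.mul_apply, hm, one_mul] at g1
  rw [mul_inv, inv_inv, MulChar.mul_apply, MulChar.inv_apply', inv_neg_one] at g2
  have m1 := hp_mellin θ φ h2 h1 D⁻¹
  have m2 := hp_mellin θ φ h2 h1 (χ₄⁻¹ * D⁻¹)
  have e : φ * (χ₄⁻¹ * D⁻¹) = χ₄ * D⁻¹ := by
    rw [← h4, pow_two]; group
  rw [inv_inv] at m1
  rw [e, mul_inv, inv_inv, inv_inv] at m2
  have s1 := hp_neg_one_sq D
  have s2 := hp_neg_one_sq χ₄
  have z1 : gaussSum (φ * D) θ ≠ 0 := by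
    intro h
    rw [h, zero_mul] at g1
    have : D (-1) ≠ 0 := by intro h; simp [h] at s1
    exact mul_ne_zero this hq g1.symm
  have z2 : gaussSum (χ₄⁻¹ * D) θ ≠ 0 := by
    intro h
    rw [h, zero_mul] at g2
    have h3 : D (-1) ≠ 0 := by intro h; simp [h] at s1
    have h4 : χ₄ (-1) ≠ 0 := by intro h; simp [h] at s2
    exact mul_ne_zero (mul_ne_zero h4 h3) hq g2.symm
  rw [div_eq_iff (mul_ne_zero z1 z2)]
  generalize (∑ u, φ (u * (1 + u)) * D⁻¹ u) = M1 at *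
  generalize (∑ v, φ (v * (1 + v)) * (χ₄⁻¹ * D⁻¹) v) = M2 at *
  generalize gaussSum φ θ = G at *
  generalize gaussSum (φ * D) θ = a at *
  generalize gaussSum (χ₄⁻¹ * D) θ = b at *
  generalize gaussSum (φ * D⁻¹) θ = a' at *
  generalize gaussSum (χ₄ * D⁻¹) θ = b' at *
  generalize gaussSum D θ = x at *
  generalize gaussSum (χ₄ * D) θ = y at *
  generalize (Fintype.card F : ℂ) = q at *
  generalize D (-1) = d at *
  generalize χ₄ (-1) = c at *
  have k1 : q * (M1 * M2) = a' * b' * x * y := by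
    rw [← g0]; linear_combination (-a' * x) * m2 - G * M2 * m1
  have k2 : a * b * (a' * b') = c * q ^ 2 := by
    linear_combination b * b' * g1 + d * q * g2 + c * q ^ 2 * s1
  have k3 : q ^ 2 * (x * y) = q ^ 2 * (c / q * (M1 * M2) * (a * b)) := by
    have : q ^ 2 * (c / q * (M1 * M2) * (a * b)) = q * c * (M1 * M2) * (a * b) := by
      field_simp
    rw [this]
    linear_combination (-c * a * b) * k1 - c * x * y * k2 - q ^ 2 * x * y * s2
  exact mul_left_cancel₀ (pow_ne_zero 2 hq) k3

lemma hp_E [Fintype (MulChar F ℂ)] (φ : MulChar F ℂ) (h2 : φ ^ 2 = 1)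
    (hm : φ (-1) = 1) (χ₄ : MulChar F ℂ) (h4 : χ₄ ^ 2 = φ) (C : MulChar F ℂ) :
    ∑ D ∈ univ.filter (fun D : MulChar F ℂ => D ^ 2 = χ₄ * C),
      ((∑ u, φ (u * (1 + u)) * D⁻¹ u) * ∑ v, φ (v * (1 + v)) * (χ₄⁻¹ * D⁻¹) v) =
    C (-1) * ∑ y, (φ * C) y * ∑ x, χ₄ x * φ ((x - y) * (1 - x * y)) := by
  have hφi : φ * χ₄⁻¹ = χ₄ := by rw [← h4, pow_two]; group
  have b1 : ∑ D ∈ univ.filter (fun D : MulChar F ℂ => D ^ 2 = χ₄ * C),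
      ((∑ u, φ (u * (1 + u)) * D⁻¹ u) * ∑ v, φ (v * (1 + v)) * (χ₄⁻¹ * D⁻¹) v) =
      ∑ u, ∑ v, φ (u * (1 + u)) * φ (v * (1 + v)) * χ₄⁻¹ v *
        ∑ y, if y ^ 2 = (u * v)⁻¹ then (χ₄ * C) y else 0 := by
    simp_rw [sum_mul_sum]
    rw [sum_comm]
    apply sum_congr rfl
    intro u _
    rw [sum_comm]
    apply sum_congr rfl
    intro v _
    by_cases hu : u = 0
    · subst hu; simp [MulChar.map_zero]
    by_cases hv : v = 0
    · subst hv; simp [MulChar.map_zero]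
    rw [← hp_char_sqrts _ _ (inv_ne_zero (mul_ne_zero hu hv)), mul_sum]
    apply sum_congr rfl
    intro D _
    rw [MulChar.mul_apply, MulChar.inv_apply' D, MulChar.inv_apply' D, mul_inv, map_mul D]
    ring
  have b2 : ∀ y : F, ∑ v, ∑ u, φ (u * (1 + u)) * φ (v * (1 + v)) * χ₄⁻¹ v *
        (if y ^ 2 = (u * v)⁻¹ then (χ₄ * C) y else 0) =
      (φ * C) y * ∑ x, χ₄ x * φ ((x + y) * (1 + x * y)) := by
    intro y
    by_cases hy : y = 0
    · subst hy; simp [MulChar.map_zero]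
    rw [← hp_sum_mul y⁻¹ (inv_ne_zero hy), mul_sum]
    apply sum_congr rfl
    intro x _
    by_cases hx : x = 0
    · subst hx; simp [MulChar.map_zero]
    have c1 : ∀ u : F, y ^ 2 = (u * (x * y⁻¹))⁻¹ ↔ u = (x * y)⁻¹ := by
      intro u
      constructor
      · intro h
        rw [← inv_inj, inv_inv] at h
        have h' : u * x * y = 1 := by
          have h3 : (y ^ 2)⁻¹ * y ^ 2 = 1 := inv_mul_cancel₀ (pow_ne_zero 2 hy)
          rw [h] at h3
          rw [← h3]
          field_simp
        rw [mul_assoc] at h'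
        exact eq_inv_of_mul_eq_one_left h'
      · rintro rfl
        field_simp
    simp only [c1, mul_ite, mul_zero, sum_ite_eq', mem_univ, if_true]
    have c2 : φ ((x * y)⁻¹ * (1 + (x * y)⁻¹)) = φ (1 + x * y) := by
      apply hp_absorb φ h2 (x * y)⁻¹ (inv_ne_zero (mul_ne_zero hx hy))
      field_simp
      ring
    have c3 : φ (x * y⁻¹ * (1 + x * y⁻¹)) = φ (x * (x + y)) := by
      apply hp_absorb φ h2 y⁻¹ (inv_ne_zero hy)
      field_simp
      ring
    have c4 : χ₄⁻¹ (x * y⁻¹) = χ₄⁻¹ x * χ₄ y := by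
      rw [map_mul, MulChar.inv_apply' _ y⁻¹, inv_inv]
    have c5 : χ₄ y * χ₄ y = φ y := by
      rw [← h4, MulChar.pow_apply' _ two_ne_zero, pow_two]
    have c6 : φ x * χ₄⁻¹ x = χ₄ x := by rw [← MulChar.mul_apply, hφi]
    rw [c2, c3, c4, MulChar.mul_apply, MulChar.mul_apply, ← c5, ← c6, map_mul, map_mul]
    ring
  rw [b1]
  have b3 : ∀ f : F → F → F → ℂ, ∑ u, ∑ v, ∑ y, f u v y = ∑ y, ∑ v, ∑ u, f u v y := by
    intro f
    rw [sum_comm]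
    simp_rw [sum_comm (f := fun u y => f u _ y)]
    rw [sum_comm]
  have b4 := b3 (fun u v y => φ (u * (1 + u)) * φ (v * (1 + v)) * χ₄⁻¹ v *
        (if y ^ 2 = (u * v)⁻¹ then (χ₄ * C) y else 0))
  simp only [← mul_sum univ] at b4
  rw [b4]
  rw [sum_congr rfl (fun y _ => b2 y)]
  rw [← hp_sum_neg, mul_sum]
  apply sum_congr rfl
  intro y _
  have : (φ * C) (-y) = C (-1) * (φ * C) y := by
    rw [neg_eq_neg_one_mul, map_mul, MulChar.mul_apply, hm, one_mul]
  rw [this, mul_assoc]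
  congr 2
  apply sum_congr rfl
  intro x _
  congr 2
  ring

lemma hp_S [Fintype (MulChar F ℂ)] (θ : AddChar F ℂ) (φ : MulChar F ℂ) (h2 : φ ^ 2 = 1)
    (h1 : φ ≠ 1) (C : MulChar F ℂ) :
    ∑ χ : MulChar F ℂ, (gaussSum (φ * χ) θ * gaussSum χ⁻¹ θ) *
      (gaussSum (φ * (C * χ)) θ * gaussSum (C * χ)⁻¹ θ) *
      (gaussSum (φ * (C⁻¹ * χ)) θ * gaussSum (C⁻¹ * χ)⁻¹ θ) =
    gaussSum φ θ ^ 3 * ((Fintype.card F : ℂ) - 1) *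
      ∑ v, ∑ w, φ ((v * w)⁻¹ * (1 + (v * w)⁻¹)) * φ (v * (1 + v)) * φ (w * (1 + w)) *
        C v * C⁻¹ w := by
  simp_rw [hp_mellin θ φ h2 h1]
  have d1 : ∀ χ : MulChar F ℂ, gaussSum φ θ * (∑ u, φ (u * (1 + u)) * χ u) *
      (gaussSum φ θ * ∑ u, φ (u * (1 + u)) * (C * χ) u) *
      (gaussSum φ θ * ∑ u, φ (u * (1 + u)) * (C⁻¹ * χ) u) =
      gaussSum φ θ ^ 3 * ∑ v, ∑ w, ∑ u, φ (u * (1 + u)) * φ (v * (1 + v)) * φ (w * (1 + w)) *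
        C v * C⁻¹ w * χ (u * v * w) := by
    intro χ
    have : ∀ v w : F, ∑ u, φ (u * (1 + u)) * φ (v * (1 + v)) * φ (w * (1 + w)) *
        C v * C⁻¹ w * χ (u * v * w) = (∑ u, φ (u * (1 + u)) * χ u) *
        ((φ (v * (1 + v)) * (C * χ) v) * (φ (w * (1 + w)) * (C⁻¹ * χ) w)) := by
      intro v w
      rw [sum_mul]
      apply sum_congr rfl
      intro u _
      rw [map_mul χ, map_mul χ, MulChar.mul_apply, MulChar.mul_apply]
      ring
    simp_rw [this, ← mul_sum, ← sum_mul]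
    ring
  simp_rw [d1, ← mul_sum]
  rw [mul_assoc]
  congr 1
  rw [sum_comm, mul_sum]
  apply sum_congr rfl
  intro v _
  rw [sum_comm, mul_sum]
  apply sum_congr rfl
  intro w _
  rw [sum_comm]
  simp_rw [← mul_sum, hp_orth]
  by_cases hv : v = 0
  · subst hv; simp [MulChar.map_zero]
  by_cases hw : w = 0
  · subst hw; simp [MulChar.map_zero]
  have : ∀ u : F, u * v * w = 1 ↔ u = (v * w)⁻¹ := by
    intro u
    rw [mul_assoc, mul_eq_one_iff_eq_inv₀ (mul_ne_zero hv hw)]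
  simp only [this, mul_ite, mul_zero, sum_ite_eq', mem_univ, if_true]
  ring
end helpers

open scoped Classical in
theorem stmt11 {F : Type} [Field F] [Fintype F] (hq : Fintype.card F % 4 = 1)
    (θ : AddChar F ℂ) (hθ : θ ≠ 1)
    (φ : MulChar F ℂ) (hφ : orderOf φ = 2)
    (χ₄ : MulChar F ℂ) (hχ₄ : orderOf χ₄ = 4)
    (C : MulChar F ℂ) (hC : C ^ 4 ≠ 1) :
    letI : Fintype (MulChar F ℂ) := Fintype.ofFinite _
    ffHyp θ ![φ, φ * C, φ * C⁻¹] ![1, C⁻¹, C] (-1)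
      = C (-1) *
          (1 + if ∃ D : MulChar F ℂ, D ^ 2 = χ₄ * C then
              ∑ D ∈ Finset.univ.filter (fun D : MulChar F ℂ => D ^ 2 = χ₄ * C),
                gaussSum D θ * gaussSum (χ₄ * D) θ /
                  (gaussSum (φ * D) θ * gaussSum (χ₄⁻¹ * D) θ)
            else 0) := by
  letI : Fintype (MulChar F ℂ) := Fintype.ofFinite _
  show ffHyp θ ![φ, φ * C, φ * C⁻¹] ![1, C⁻¹, C] (-1) = _
  have hF : ringChar F ≠ 2 := by
    intro h
    have := FiniteField.even_card_of_char_two h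
    omega
  have h2 : φ ^ 2 = 1 := by rw [← hφ]; exact pow_orderOf_eq_one φ
  have h1 : φ ≠ 1 := by intro h; rw [h, orderOf_one] at hφ; omega
  have h4 : χ₄ ^ 2 = φ := by
    apply hp_unique _ _ _ _ h2 h1
    · rw [← pow_mul]; have := pow_orderOf_eq_one χ₄; rwa [hχ₄] at this
    · intro h
      have := orderOf_dvd_of_pow_eq_one h
      rw [hχ₄] at this; omega
  obtain ⟨i, hi⟩ : ∃ i : F, i ^ 2 = -1 := by
    have : IsSquare (-1 : F) := by
      rw [FiniteField.isSquare_neg_one_iff]; omega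
    obtain ⟨i, hi⟩ := this
    exact ⟨i, by rw [hi, pow_two]⟩
  have hi0 : i ≠ 0 := by rintro rfl; simp at hi
  have htwo : (2 : F) ≠ 0 := Ring.two_ne_zero hF
  have hm : φ (-1) = 1 := by
    rw [← hi, pow_two, map_mul, hp_phi_sq φ h2 i hi0]
  have h14 : φ 2 = χ₄ (-1) := by
    have e1 : χ₄ (-1) = φ i := by
      rw [← hi, map_pow, ← h4, MulChar.pow_apply' _ two_ne_zero]
    rw [e1]
    have hi1 : 1 + i ≠ 0 := by
      intro h
      have : i = -1 := by linear_combination h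
      rw [this] at hi
      apply htwo
      linear_combination hi
    apply hp_absorb φ h2 ((1 + i) * i⁻¹) (mul_ne_zero hi1 (inv_ne_zero hi0))
    field_simp
    linear_combination -hi
  have hC2 : C ^ 4 ≠ 1 := hC
  have hφ4 : φ ^ 4 = 1 := by
    have : φ ^ 4 = (φ ^ 2) ^ 2 := by rw [← pow_mul]
    rw [this, h2, one_pow]
  have hC1 : C ≠ 1 := by rintro rfl; simp at hC
  have hφC : φ * C ≠ 1 := by
    intro h
    apply hC
    have := congrArg (· ^ 4) h
    simpa [mul_pow, hφ4] using this
  have hφi : φ⁻¹ = φ := inv_eq_of_mul_eq_one_right (by rw [← pow_two]; exact h2)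
  have hq0 : (Fintype.card F : ℂ) ≠ 0 := by exact_mod_cast Fintype.card_ne_zero
  have hq1 : (Fintype.card F : ℂ) - 1 ≠ 0 := by
    rw [sub_ne_zero]
    exact_mod_cast (Fintype.one_lt_card (α := F)).ne'
  have hT : (∑ v, ∑ w, φ ((v * w)⁻¹ * (1 + (v * w)⁻¹)) * φ (v * (1 + v)) * φ (w * (1 + w)) *
        C v * C⁻¹ w) = (Fintype.card F : ℂ) * C (-1) + χ₄ (-1) *
        ∑ t, (φ * C) t * ∑ m, φ (m + 2) * φ ((1 + t) ^ 2 - t * m ^ 2) := by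
    rw [hp_T hF φ h2 h1, ← hp_T1 φ h2 h1 hm C hφC, ← h14]
    have hs := MulChar.sum_eq_zero_of_ne_one hφC
    have : ∀ t : F, (φ * C) t * ∑ z, φ (z * (z + (1 + t))) * (1 + φ (z ^ 2 - 4 * t)) =
        (φ * C) t * ∑ z, φ (z * (z + (1 + t))) +
        φ 2 * ((φ * C) t * ∑ m, φ (m + 2) * φ ((1 + t) ^ 2 - t * m ^ 2)) - (φ * C) t := by
      intro t
      simp_rw [mul_one_add, Finset.sum_add_distrib]
      rw [hp_inner hF φ h2 h1 i hi]
      ring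
    rw [Finset.sum_congr rfl (fun t _ => this t), Finset.sum_sub_distrib, hs, sub_zero,
      Finset.sum_add_distrib, Finset.mul_sum]
  have hE : (if ∃ D : MulChar F ℂ, D ^ 2 = χ₄ * C then
              ∑ D ∈ Finset.univ.filter (fun D : MulChar F ℂ => D ^ 2 = χ₄ * C),
                gaussSum D θ * gaussSum (χ₄ * D) θ /
                  (gaussSum (φ * D) θ * gaussSum (χ₄⁻¹ * D) θ)
            else 0) = χ₄ (-1) / (Fintype.card F : ℂ) * (C (-1) *
        ∑ t, (φ * C) t * ∑ m, φ (m + 2) * φ ((1 + t) ^ 2 - t * m ^ 2)) := by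
    have e1 : (if ∃ D : MulChar F ℂ, D ^ 2 = χ₄ * C then
              ∑ D ∈ Finset.univ.filter (fun D : MulChar F ℂ => D ^ 2 = χ₄ * C),
                gaussSum D θ * gaussSum (χ₄ * D) θ /
                  (gaussSum (φ * D) θ * gaussSum (χ₄⁻¹ * D) θ)
            else 0) = ∑ D ∈ Finset.univ.filter (fun D : MulChar F ℂ => D ^ 2 = χ₄ * C),
                gaussSum D θ * gaussSum (χ₄ * D) θ /
                  (gaussSum (φ * D) θ * gaussSum (χ₄⁻¹ * D) θ) := by
      split_ifs with h
      · rfl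
      · symm
        apply Finset.sum_eq_zero
        intro D hD
        exact absurd ⟨D, (Finset.mem_filter.mp hD).2⟩ h
    rw [e1]
    have e2 := hp_E φ h2 hm χ₄ h4 C
    simp_rw [hp_K hF φ h2 h1 hm χ₄ h4] at e2
    rw [← e2, Finset.mul_sum]
    apply Finset.sum_congr rfl
    intro D hD
    have hD := (Finset.mem_filter.mp hD).2
    apply hp_term θ hθ φ h2 h1 hm χ₄ h4
    have : D ^ 8 = (D ^ 2) ^ 4 := by rw [← pow_mul]
    have h44 : χ₄ ^ 4 = 1 := by rw [← hχ₄]; exact pow_orderOf_eq_one χ₄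
    rw [this, hD, mul_pow, h44, one_mul]
    exact hC
  rw [hE]
  have hS := hp_S θ φ h2 h1 C
  have hL : ffHyp θ ![φ, φ * C, φ * C⁻¹] ![1, C⁻¹, C] (-1) =
      (-1 : ℂ) / ((Fintype.card F : ℂ) - 1) *
      ((∑ χ : MulChar F ℂ, (gaussSum (φ * χ) θ * gaussSum χ⁻¹ θ) *
      (gaussSum (φ * (C * χ)) θ * gaussSum (C * χ)⁻¹ θ) *
      (gaussSum (φ * (C⁻¹ * χ)) θ * gaussSum (C⁻¹ * χ)⁻¹ θ)) /
      (gaussSum φ θ * gaussSum 1 θ * (gaussSum (φ * C) θ * gaussSum (φ * C⁻¹) θ) *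
        (gaussSum C θ * gaussSum C⁻¹ θ))) := by
    unfold ffHyp
    congr 1
    rw [Finset.sum_div]
    apply Finset.sum_congr rfl
    intro χ _
    have hs : χ (-1) ^ Fintype.card (Fin 3) * χ (-1) = 1 := by
      have := hp_neg_one_sq χ
      rw [Fintype.card_fin]
      linear_combination (χ (-1) * χ (-1) + 1) * this
    rw [mul_assoc, hs, mul_one, Fin.prod_univ_three]
    simp only [Matrix.cons_val_zero, Matrix.cons_val_one, Matrix.cons_val, inv_one, one_mul,
      inv_inv, mul_assoc φ]
    simp only [div_eq_mul_inv, mul_inv (gaussSum _ _), mul_inv (_ * _ : ℂ)]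
    ring
  have g0 := hp_gg θ hθ φ h1
  rw [hφi, hm, one_mul] at g0
  have g1 := hp_gg θ hθ _ hφC
  rw [mul_inv, hφi, MulChar.mul_apply, hm, one_mul] at g1
  have g2 := hp_gg θ hθ _ hC1
  have hg : gaussSum φ θ ≠ 0 := by
    intro h; rw [h, zero_mul] at g0; exact hq0 g0.symm
  have s1 := hp_neg_one_sq C
  have hc0 : C (-1) ≠ 0 := by intro h; simp [h] at s1
  rw [hL, hS, hT, g1, g2, gaussSum_one_left hθ]
  generalize (∑ t, (φ * C) t * ∑ m, φ (m + 2) * φ ((1 + t) ^ 2 - t * m ^ 2)) = V at *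
  generalize (Fintype.card F : ℂ) = q at *
  generalize gaussSum φ θ = G at *
  generalize C (-1) = c at *
  generalize χ₄ (-1) = x at *
  have k1 : G * -1 * (c * q) * (c * q) = -(G * q ^ 2) := by
    linear_combination (-G * q ^ 2) * s1
  have k2 : G ^ 3 = G * q := by linear_combination G * g0
  rw [k1, k2]
  have k3 : (-1 : ℂ) / (q - 1) * (G * q * (q - 1) * (q * c + x * V) / -(G * q ^ 2)) =
      (q * c + x * V) / q := by
    field_simp
  rw [k3, div_eq_iff hq0]
  have k4 : c * (1 + x / q * (c * V)) * q = c * q + x * V * (c * c) := by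
    field_simp
  rw [k4, s1]
  ring
end

section
/- Let a, b ∈ ℂ with Re(b) < 1/4. Assume that for every nonnegative integer k one has 1/2 + a − b + k ≠ 0 and 1 + a − b + k ≠ 0, and that none of the numbers 1 + 2a − 2b, 1 − 4b, 1 − 2b, 1 + 2a − 4b, 1 + a, 1 + 2a, 1 + a − 2b is a nonpositive integer. Then _4F_4[a, a + 1/2, b, b + 1/2; 1, 1/2, 1/2 + a − b, 1 + a − b | 1] = (1/2) · [ Γ(1 + 2a − 2b) Γ(1 − 4b) / ( Γ(1 − 2b) Γ(1 + 2a − 4b) ) + Γ(1 + 2a − 2b) Γ(1 + a) / ( Γ(1 + 2a) Γ(1 + a − 2b) ) ], the series on the left converging. -/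
open Complex

/-- The `k`-th coefficient of the classical generalized hypergeometric series with upper
parameters `a` and lower parameters `b` (indexed by a finite type `ι`):
`(∏ᵢ (aᵢ)ₖ) / (∏ᵢ (bᵢ)ₖ)` where `(x)ₖ` is the Pochhammer (rising factorial) symbol. -/
noncomputable def hypCoeff {ι : Type} [Fintype ι] (a b : ι → ℂ) (k : ℕ) : ℂ :=
  (∏ i, (ascPochhammer ℂ k).eval (a i)) / (∏ i, (ascPochhammer ℂ k).eval (b i))

/-- The classical generalized hypergeometric series `ₘFₘ[a ; b | z]`. -/
noncomputable def cHyp {ι : Type} [Fintype ι] (a b : ι → ℂ) (z : ℂ) : ℂ :=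
  ∑' k : ℕ, hypCoeff a b k * z ^ k

/-- A complex number is a nonpositive integer, i.e. lies in `{0, -1, -2, …}`. -/
def IsNonposInt (z : ℂ) : Prop := ∃ k : ℕ, z = -(k : ℂ)

section KumSection

open Filter Topology

namespace Kum

/-- Rising factorial. -/
noncomputable def P (x : ℂ) (k : ℕ) : ℂ := ∏ j ∈ Finset.range k, (x + j)

/-- Not a nonpositive integer. -/
def Good (x : ℂ) : Prop := ∀ k : ℕ, x + k ≠ 0

lemma P_zero (x : ℂ) : P x 0 = 1 := by simp [P]

lemma P_succ (x : ℂ) (k : ℕ) : P x (k + 1) = P x k * (x + k) := by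
  simp [P, Finset.prod_range_succ]

lemma P_succ' (x : ℂ) (k : ℕ) : P x (k + 1) = x * P (x + 1) k := by
  rw [P, Finset.prod_range_succ', P, mul_comm]
  simp [add_comm, add_left_comm]

lemma P_ne {x : ℂ} (h : Good x) (k : ℕ) : P x k ≠ 0 :=
  Finset.prod_ne_zero_iff.mpr fun j _ => h j

lemma eval_eq (x : ℂ) (k : ℕ) : (ascPochhammer ℂ k).eval x = P x k := by
  induction k with
  | zero => simp [P]
  | succ k ih => rw [ascPochhammer_succ_eval, ih, P_succ]

lemma Good.ne {x : ℂ} (h : Good x) : x ≠ 0 := by simpa using h 0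

lemma Good.add {x : ℂ} (h : Good x) (n : ℕ) : Good (x + n) := fun k => by
  have := h (n + k)
  push_cast at this
  rwa [← add_assoc] at this

lemma Good.add_one {x : ℂ} (h : Good x) : Good (x + 1) := by simpa using h.add 1

lemma Good.Gamma_ne {x : ℂ} (h : Good x) : Gamma x ≠ 0 :=
  Gamma_ne_zero fun m hm => h m (by rw [hm]; ring)

lemma good_of_re {x : ℂ} (h : 0 < x.re) : Good x := fun k hk => by
  have := congrArg Complex.re hk
  simp at this
  have h2 : (0 : ℝ) ≤ k := Nat.cast_nonneg k
  linarith

lemma Gamma_add_nat {x : ℂ} (h : Good x) (n : ℕ) : Gamma (x + n) = Gamma x * P x n := by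
  induction n with
  | zero => simp [P]
  | succ n ih =>
    rw [P_succ, Nat.cast_succ, ← add_assoc, Gamma_add_one _ (h n), ih]; ring

/-- normalised Pochhammer -/
lemma tendsto_Q (x : ℂ) :
    Tendsto (fun n : ℕ => P x n / (n.factorial * (n : ℂ) ^ (x - 1))) atTop (𝓝 (Gamma x)⁻¹) := by
  by_cases h : Good x
  · have h1 := (GammaSeq_tendsto_Gamma x).inv₀ h.Gamma_ne
    have h2 : Tendsto (fun n : ℕ => (n : ℂ) / (n + x)) atTop (𝓝 1) :=
      tendsto_natCast_div_add_atTop x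
    have h3 := h1.mul h2
    rw [mul_one] at h3
    refine h3.congr' ?_
    filter_upwards [eventually_ne_atTop 0] with n hn
    have hn' : (n : ℂ) ≠ 0 := Nat.cast_ne_zero.mpr hn
    have hf : (n.factorial : ℂ) ≠ 0 := Nat.cast_ne_zero.mpr n.factorial_ne_zero
    have hx := h n
    have hp : (n : ℂ) ^ x ≠ 0 := by simp [cpow_eq_zero_iff, hn']
    have hx' : (n : ℂ) + x ≠ 0 := by rwa [add_comm]
    rw [GammaSeq, ← P, P_succ, cpow_sub _ _ hn', cpow_one]
    field_simp
    ring
  · simp only [Good, not_forall, not_not] at h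
    obtain ⟨k, hk⟩ := h
    have : x = -k := by linear_combination hk
    rw [this, Gamma_neg_nat_eq_zero, inv_zero]
    refine tendsto_const_nhds.congr' ?_
    filter_upwards [eventually_gt_atTop k] with n hn
    have : P (-(k : ℂ)) n = 0 := Finset.prod_eq_zero (Finset.mem_range.mpr hn) (by simp)
    simp [this]

lemma tendsto_Gam {x : ℂ} (h : Good x) :
    Tendsto (fun n : ℕ => Gamma (x + n) / (n.factorial * (n : ℂ) ^ (x - 1))) atTop (𝓝 1) := by
  have := (tendsto_Q x).const_mul (Gamma x)
  rw [mul_inv_cancel₀ h.Gamma_ne] at this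
  refine this.congr fun n => ?_
  rw [Gamma_add_nat h]; ring

/-- hypergeometric term -/
noncomputable def T (a b c : ℂ) (k : ℕ) : ℂ := P a k * P b k / (P c k * k.factorial)

lemma T_bound (a b : ℂ) {c : ℂ} (hc : Good c) :
    (fun n : ℕ => T a b c n) =O[atTop] (fun n : ℕ => (n : ℝ) ^ ((a + b - c).re - 1)) := by
  have h := (((tendsto_Q a).mul (tendsto_Q b)).div (tendsto_Q c)
    (inv_ne_zero hc.Gamma_ne)).isBigO_one ℝ
  have h2 : (fun n : ℕ => (n : ℂ) ^ (a + b - c - 1)) =O[atTop]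
      (fun n : ℕ => (n : ℝ) ^ ((a + b - c).re - 1)) := by
    refine Asymptotics.IsBigO.of_bound 1 ?_
    filter_upwards [eventually_gt_atTop 0] with n hn
    rw [Complex.norm_natCast_cpow_of_pos hn, one_mul]
    simp only [sub_re, one_re]
    exact le_abs_self _
  have h3 := h.mul h2
  simp only [one_mul] at h3
  refine h3.congr' ?_ EventuallyEq.rfl
  filter_upwards [eventually_ne_atTop 0] with n hn
  have hn' : (n : ℂ) ≠ 0 := Nat.cast_ne_zero.mpr hn
  have hf : (n.factorial : ℂ) ≠ 0 := Nat.cast_ne_zero.mpr n.factorial_ne_zero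
  have hpa : (n : ℂ) ^ a ≠ 0 := by simp [cpow_eq_zero_iff, hn']
  have hpb : (n : ℂ) ^ b ≠ 0 := by simp [cpow_eq_zero_iff, hn']
  have hpc : (n : ℂ) ^ c ≠ 0 := by simp [cpow_eq_zero_iff, hn']
  have := P_ne hc n
  simp only [Pi.div_apply, T, cpow_sub _ _ hn', cpow_add _ _ hn', cpow_one]
  field_simp

lemma T_summable (a b : ℂ) {c : ℂ} (hc : Good c) (h : 0 < (c - a - b).re) :
    Summable (T a b c) := by
  refine summable_of_isBigO_nat (Real.summable_nat_rpow.mpr ?_) (T_bound a b hc)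
  simp only [sub_re, add_re] at *
  linarith

lemma rpow_tendsto {e : ℝ} (h : e < 0) : Tendsto (fun n : ℕ => (n : ℝ) ^ e) atTop (𝓝 0) := by
  have := (tendsto_rpow_neg_atTop (neg_pos.mpr h)).comp tendsto_natCast_atTop_atTop
  simpa [Function.comp_def] using this

/-! Gauss -/

lemma gauss_tel (a b : ℂ) {c : ℂ} (hc : Good c) (N : ℕ) :
    ∑ k ∈ Finset.range N, (c * (c - a - b) * T a b c k - (c - a) * (c - b) * T a b (c + 1) k)
      = - c * (N * T a b c N) := by
  induction N with
  | zero => simp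
  | succ k ih =>
    rw [Finset.sum_range_succ, ih]
    have e : P (c + 1) k = P c k * (c + k) / c := by
      rw [eq_div_iff hc.ne, ← P_succ, P_succ']; ring
    have h1 := P_ne hc k
    have h2 := hc k
    have h3 := hc.ne
    have hf : (k.factorial : ℂ) ≠ 0 := Nat.cast_ne_zero.mpr k.factorial_ne_zero
    have hk : (k : ℂ) + 1 ≠ 0 := by exact_mod_cast k.succ_ne_zero
    simp only [T, e, P_succ, Nat.factorial_succ]
    push_cast
    field_simp
    ring

lemma gauss_step (a b : ℂ) {c : ℂ} (hc : Good c) (h : 0 < (c - a - b).re) :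
    c * (c - a - b) * ∑' k, T a b c k = (c - a) * (c - b) * ∑' k, T a b (c + 1) k := by
  have s1 := T_summable a b hc h
  have s2 := T_summable a b hc.add_one (by simp at h ⊢; linarith)
  have t := ((s1.mul_left (c * (c - a - b))).sub
    (s2.mul_left ((c - a) * (c - b)))).hasSum.tendsto_sum_nat
  simp only [gauss_tel a b hc] at t
  have z : Tendsto (fun N : ℕ => -c * (N * T a b c N)) atTop (𝓝 0) := by
    have h1 : (fun n : ℕ => (n : ℂ)) =O[atTop] (fun n : ℕ => (n : ℝ)) :=
      Asymptotics.IsBigO.of_bound 1 (by simp)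
    have h2 := h1.mul (T_bound a b hc)
    have h3 : Tendsto (fun N : ℕ => ((N : ℂ) * T a b c N)) atTop (𝓝 0) := by
      refine h2.trans_tendsto ((rpow_tendsto (e := (a + b - c).re) ?_).congr' ?_)
      · simp at h ⊢; linarith
      · filter_upwards [eventually_gt_atTop 0] with n hn
        have : (0 : ℝ) < n := by exact_mod_cast hn
        rw [Real.rpow_sub_one this.ne']; field_simp
    simpa using h3.const_mul (-c)
  have := tendsto_nhds_unique t z
  rw [(s1.mul_left _).tsum_sub (s2.mul_left _), tsum_mul_left, tsum_mul_left] at this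
  linear_combination this

lemma norm_P_le (x : ℂ) (k : ℕ) : ‖P x k‖ ≤ ‖P ((‖x‖ : ℝ) : ℂ) k‖ := by
  simp only [P, norm_prod]
  refine Finset.prod_le_prod (fun _ _ => norm_nonneg _) fun j _ => ?_
  have : ‖((‖x‖ : ℝ) : ℂ) + (j : ℂ)‖ = ‖x‖ + j := by
    rw [← ofReal_natCast, ← ofReal_add, norm_real, Real.norm_of_nonneg (by positivity)]
  rw [this]
  exact (norm_add_le _ _).trans (by simp)

lemma norm_P_ge (x : ℂ) (M : ℝ) (hM : 0 ≤ M) (h : M ≤ x.re) (k : ℕ) :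
    ‖P (M : ℂ) k‖ ≤ ‖P x k‖ := by
  simp only [P, norm_prod]
  refine Finset.prod_le_prod (fun _ _ => norm_nonneg _) fun j _ => ?_
  have : ‖(M : ℂ) + (j : ℂ)‖ = M + j := by
    rw [← ofReal_natCast, ← ofReal_add, norm_real, Real.norm_of_nonneg (by positivity)]
  rw [this]
  refine le_trans ?_ (re_le_norm _)
  simp [h]

lemma tendsto_inv_lin (x : ℂ) : Tendsto (fun m : ℕ => (x + m)⁻¹) atTop (𝓝 0) := by
  have h := (tendsto_natCast_div_add_atTop x).mul
    (tendsto_inv_atTop_nhds_zero_nat (𝕜 := ℂ))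
  rw [mul_zero] at h
  refine h.congr' ?_
  filter_upwards [eventually_ne_atTop 0] with n hn
  have hn' : (n : ℂ) ≠ 0 := Nat.cast_ne_zero.mpr hn
  rw [add_comm x]
  field_simp

lemma gauss_lim (a b c : ℂ) :
    Tendsto (fun m : ℕ => ∑' k, T a b (c + m) k) atTop (𝓝 1) := by
  set M : ℝ := ‖a‖ + ‖b‖ + 1 with hM
  have M0 : 0 < M := by positivity
  have gM : Good (M : ℂ) := good_of_re (by simpa using M0)
  have e : ∑' k, (P a k * P b k / k.factorial * 0 ^ k) = 1 := by
    rw [tsum_eq_single 0]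
    · simp [P]
    · intro k hk; simp [hk]
  rw [← e]
  refine tendsto_tsum_of_dominated_convergence
    (bound := fun k => ‖T ((‖a‖ : ℝ) : ℂ) ((‖b‖ : ℝ) : ℂ) (M : ℂ) k‖) ?_ ?_ ?_
  · refine (T_summable _ _ gM ?_).norm
    simp [hM]; linarith
  · intro k
    have : Tendsto (fun m : ℕ => ∏ j ∈ Finset.range k, (c + j + m)⁻¹) atTop
        (𝓝 (∏ j ∈ Finset.range k, 0)) :=
      tendsto_finsetProd _ fun j _ => tendsto_inv_lin _
    have := this.const_mul (P a k * P b k / k.factorial)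
    rw [Finset.prod_const, Finset.card_range] at this
    refine this.congr fun m => ?_
    rw [T, P.eq_def (c + m), Finset.prod_inv_distrib]
    simp only [add_right_comm c]
    ring
  · obtain ⟨m0, hm0⟩ := exists_nat_ge (M - c.re)
    filter_upwards [eventually_ge_atTop m0] with m hm k
    have hm' : (m0 : ℝ) ≤ m := by exact_mod_cast hm
    have h1 := norm_P_ge (c + m) M M0.le (by simp; linarith) k
    have h2 := norm_P_le a k
    have h3 := norm_P_le b k
    have h4 : 0 < ‖P (M : ℂ) k‖ := norm_pos_iff.mpr (P_ne gM k)
    have hf : (0 : ℝ) < ‖(k.factorial : ℂ)‖ :=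
      norm_pos_iff.mpr (Nat.cast_ne_zero.mpr k.factorial_ne_zero)
    simp only [T, norm_div, norm_mul]
    gcongr

/-- Gauss closed form -/
noncomputable def GG (a b c : ℂ) : ℂ :=
  Gamma c * Gamma (c - a - b) / (Gamma (c - a) * Gamma (c - b))

lemma GG_step (a b : ℂ) {c : ℂ} (hc : Good c) (h1 : Good (c - a - b)) (h2 : Good (c - a))
    (h3 : Good (c - b)) :
    c * (c - a - b) * GG a b c = (c - a) * (c - b) * GG a b (c + 1) := by
  have e1 : c + 1 - a - b = (c - a - b) + 1 := by ring
  have e2 : c + 1 - a = (c - a) + 1 := by ring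
  have e3 : c + 1 - b = (c - b) + 1 := by ring
  rw [GG, GG, e1, e2, e3, Gamma_add_one _ hc.ne, Gamma_add_one _ h1.ne, Gamma_add_one _ h2.ne,
    Gamma_add_one _ h3.ne]
  have := h2.Gamma_ne
  have := h3.Gamma_ne
  have := h2.ne
  have := h3.ne
  field_simp

lemma GG_lim (a b : ℂ) {c : ℂ} (hc : Good c) (h1 : Good (c - a - b)) (h2 : Good (c - a))
    (h3 : Good (c - b)) :
    Tendsto (fun m : ℕ => GG a b (c + m)) atTop (𝓝 1) := by
  have := ((tendsto_Gam hc).mul (tendsto_Gam h1)).div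
    ((tendsto_Gam h2).mul (tendsto_Gam h3)) (by simp)
  simp only [mul_one, div_one] at this
  refine this.congr' ?_
  filter_upwards [eventually_ne_atTop 0] with n hn
  have hn' : (n : ℂ) ≠ 0 := Nat.cast_ne_zero.mpr hn
  have hf : (n.factorial : ℂ) ≠ 0 := Nat.cast_ne_zero.mpr n.factorial_ne_zero
  have hpa : (n : ℂ) ^ a ≠ 0 := by simp [cpow_eq_zero_iff, hn']
  have hpb : (n : ℂ) ^ b ≠ 0 := by simp [cpow_eq_zero_iff, hn']
  have hpc : (n : ℂ) ^ c ≠ 0 := by simp [cpow_eq_zero_iff, hn']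
  have g2 := (h2.add n).Gamma_ne
  have g3 := (h3.add n).Gamma_ne
  have e1 : c - a + n - b = (c - a - b) + n := by ring
  have e2 : c + n - a = (c - a) + n := by ring
  have e3 : c + n - b = (c - b) + n := by ring
  simp only [Pi.div_apply, GG, e1, e2, e3]
  simp only [cpow_sub _ _ hn', cpow_one]
  field_simp

lemma gauss_chain (a b : ℂ) (n : ℕ) : ∀ {c : ℂ} (_ : Good c) (_ : 0 < (c - a - b).re)
    (_ : Good (c - a)) (_ : Good (c - b)),
    (∑' k, T a b c k) * GG a b (c + n) = (∑' k, T a b (c + n) k) * GG a b c := by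
  induction n with
  | zero => intro c _ _ _ _; simp [mul_comm]
  | succ n ih =>
    intro c hc h h2 h3
    have g := good_of_re h
    have a1 := gauss_step a b hc h
    have a2 := GG_step a b hc g h2 h3
    have e2 : c + 1 - a = (c - a) + 1 := by ring
    have e3 : c + 1 - b = (c - b) + 1 := by ring
    have := ih hc.add_one (by simp at h ⊢; linarith) (e2 ▸ h2.add_one) (e3 ▸ h3.add_one)
    have e : c + ((n + 1 : ℕ) : ℂ) = c + 1 + n := by push_cast; ring
    rw [e]
    have nz : c * (c - a - b) ≠ 0 := mul_ne_zero hc.ne g.ne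
    apply mul_left_cancel₀ nz
    linear_combination GG a b (c + 1 + n) * a1 - (∑' k, T a b (c + 1 + n) k) * a2
      + (c - a) * (c - b) * this

theorem gauss (a b : ℂ) {c : ℂ} (hc : Good c) (h : 0 < (c - a - b).re)
    (h2 : Good (c - a)) (h3 : Good (c - b)) : ∑' k, T a b c k = GG a b c := by
  have t1 := (GG_lim a b hc (good_of_re h) h2 h3).const_mul (∑' k, T a b c k)
  have t2 := (gauss_lim a b c).mul_const (GG a b c)
  have := tendsto_nhds_unique (t1.congr fun n => gauss_chain a b n hc h h2 h3) t2
  simpa using this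

/-! Kummer -/

/-- alternating term -/
noncomputable def U (A B : ℂ) (k : ℕ) : ℂ := (-1) ^ k * T A B (1 + A - B) k

lemma U_summable (A : ℂ) {B : ℂ} (hc : Good (1 + A - B)) (hB : B.re < 1 / 2) :
    Summable (U A B) := by
  have := (T_summable A B hc (by simp; linarith)).norm
  refine Summable.of_norm (this.congr fun k => ?_)
  simp [U]

lemma kumB_tel (A B : ℂ) (hc : Good (1 + A - B)) (N : ℕ) :
    ∑ k ∈ Finset.range (N + 1), ((1 + A - B) * U A B k - (1 + A / 2 - B) * U A (B - 1) k)
      = (1 + A - B) / 2 * ((A + N) / (1 + A - B + N) * U A B N) := by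
  have ec : 1 + A - (B - 1) = (1 + A - B) + 1 := by ring
  simp only [U, ec]
  obtain ⟨c, hcd⟩ : ∃ c, c = 1 + A - B := ⟨_, rfl⟩
  rw [← hcd] at hc ⊢
  have hA : A = c + B - 1 := by rw [hcd]; ring
  have h3 := hc.ne
  induction N with
  | zero => simp [T, P, hA]; field_simp; ring
  | succ k ih =>
    rw [Finset.sum_range_succ, ih]
    have e : P (c + 1) (k + 1) = P c k * (c + k) * (c + k + 1) / c := by
      rw [eq_div_iff hc.ne, mul_comm, ← P_succ', P_succ, P_succ]; push_cast; ring
    have e2 : P (B - 1) (k + 1) = (B - 1) * P B k := by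
      rw [P_succ']; simp
    have h1 := P_ne hc k
    have h2 := hc k
    have h4 : c + k + 1 ≠ 0 := by have := hc (k + 1); push_cast at this; rwa [← add_assoc] at this
    have h5 : c + (k + 1) ≠ 0 := by rwa [← add_assoc]
    have hf : (k.factorial : ℂ) ≠ 0 := Nat.cast_ne_zero.mpr k.factorial_ne_zero
    have hk : (k : ℂ) + 1 ≠ 0 := by exact_mod_cast k.succ_ne_zero
    simp only [T, e, e2, P_succ, Nat.factorial_succ, pow_succ]
    generalize P A k = PA
    generalize P B k = PB
    subst hA
    push_cast
    field_simp
    ring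

lemma kumA_tel (A B : ℂ) (hc : Good (1 + A - B)) (hA1 : 1 + A ≠ 0) (N : ℕ) :
    ∑ k ∈ Finset.range (N + 1), ((1 + A - B) * (2 + A - B) * U A B k
        - (1 + A) * (2 + A - 2 * B) * U (A + 2) B k)
      = (B - 1) * (1 + A - B) * (2 + A - B) * ((B + N) / (1 + A - B + N) *
        (1 + A - B + 1 + N)⁻¹ * ((-1) ^ N * T (A + 1) B (1 + A - B) N)) := by
  have ec : 1 + (A + 2) - B = (1 + A - B) + 1 + 1 := by ring
  have ed : 2 + A - B = (1 + A - B) + 1 := by ring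
  simp only [U, ec, ed]
  obtain ⟨c, hcd⟩ : ∃ c, c = 1 + A - B := ⟨_, rfl⟩
  rw [← hcd] at hc ⊢
  have hB : B = 1 + A - c := by rw [hcd]; ring
  have h3 := hc.ne
  have h31 := hc.add_one.ne
  induction N with
  | zero => simp [T, P, hB]; field_simp; ring
  | succ k ih =>
    rw [Finset.sum_range_succ, ih]
    have e : P (c + 1 + 1) (k + 1) = P c k * (c + k) * (c + k + 1) * (c + k + 2) / (c * (c + 1)) := by
      rw [eq_div_iff (mul_ne_zero h3 h31)]
      have : P c (k + 3) = c * ((c + 1) * P (c + 1 + 1) (k + 1)) := by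
        rw [← P_succ', ← P_succ']
      rw [P_succ, P_succ, P_succ] at this
      push_cast at this
      linear_combination -this
    have e2 : P A (k + 1) = A * P (A + 1) k := P_succ' _ _
    have hA1' : A + 1 ≠ 0 := by rwa [add_comm]
    have e4 : P (A + 2) (k + 1) = P (A + 1) k * (A + 1 + k) * (A + 2 + k) / (A + 1) := by
      rw [eq_div_iff hA1']
      have : P (A + 1) (k + 2) = (A + 1) * P (A + 1 + 1) (k + 1) := P_succ' _ _
      rw [P_succ, P_succ, show A + 1 + 1 = A + 2 by ring] at this
      push_cast at this
      linear_combination -this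
    have h1 := P_ne hc k
    have h2 := hc k
    have h4 : c + k + 1 ≠ 0 := by have := hc (k + 1); push_cast at this; rwa [← add_assoc] at this
    have h6 : c + k + 2 ≠ 0 := by have := hc (k + 2); push_cast at this; rwa [← add_assoc] at this
    have r1 : c + ((k + 1 : ℕ) : ℂ) = c + k + 1 := by push_cast; ring
    have r2 : c + 1 + ((k + 1 : ℕ) : ℂ) = c + k + 2 := by push_cast; ring
    have r3 : c + 1 + (k : ℂ) = c + k + 1 := by ring
    have hf : (k.factorial : ℂ) ≠ 0 := Nat.cast_ne_zero.mpr k.factorial_ne_zero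
    have hk : (k : ℂ) + 1 ≠ 0 := by exact_mod_cast k.succ_ne_zero
    rw [r1, r2, r3]
    simp only [T, e, e2, e4, P_succ c, P_succ B, P_succ (A + 1), Nat.factorial_succ, pow_succ]
    generalize P (A + 1) k = PA
    generalize P B k = PB
    subst hB
    push_cast
    field_simp
    ring

lemma tendsto_ratio (x y : ℂ) : Tendsto (fun n : ℕ => (x + n) / (y + n)) atTop (𝓝 1) := by
  have h1 : Tendsto (fun n : ℕ => (n : ℂ) / (n + y)) atTop (𝓝 1) := tendsto_natCast_div_add_atTop y
  have h2 := h1.add ((tendsto_inv_lin y).const_mul x)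
  simp only [mul_zero, add_zero] at h2
  refine h2.congr fun n => ?_
  rw [add_comm y]; ring

lemma kumB_step (A B : ℂ) (hc : Good (1 + A - B)) (hB : B.re < 1 / 2) :
    (1 + A - B) * ∑' k, U A B k = (1 + A / 2 - B) * ∑' k, U A (B - 1) k := by
  have s1 := U_summable A hc hB
  have ec : 1 + A - (B - 1) = (1 + A - B) + 1 := by ring
  have s2 := U_summable A (B := B - 1) (ec ▸ hc.add_one) (by simp; linarith)
  have t := ((s1.mul_left (1 + A - B)).sub
    (s2.mul_left (1 + A / 2 - B))).hasSum.tendsto_sum_nat.comp (tendsto_add_atTop_nat 1)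
  have z := ((tendsto_ratio A (1 + A - B)).mul s1.tendsto_atTop_zero).const_mul ((1 + A - B) / 2)
  simp only [mul_zero] at z
  have := tendsto_nhds_unique t (z.congr fun N => (kumB_tel A B hc N).symm)
  rw [(s1.mul_left _).tsum_sub (s2.mul_left _), tsum_mul_left, tsum_mul_left] at this
  linear_combination this

lemma kumA_step (A B : ℂ) (hc : Good (1 + A - B)) (hA1 : 1 + A ≠ 0) (hB : B.re < 1 / 2) :
    (1 + A - B) * (2 + A - B) * ∑' k, U A B k
      = (1 + A) * (2 + A - 2 * B) * ∑' k, U (A + 2) B k := by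
  have s1 := U_summable A hc hB
  have ec : 1 + (A + 2) - B = (1 + A - B) + 1 + 1 := by ring
  have s2 := U_summable (A + 2) (B := B) (ec ▸ hc.add_one.add_one) hB
  have t := ((s1.mul_left ((1 + A - B) * (2 + A - B))).sub
    (s2.mul_left ((1 + A) * (2 + A - 2 * B)))).hasSum.tendsto_sum_nat.comp
      (tendsto_add_atTop_nat 1)
  have w : Tendsto (fun N : ℕ => (-1) ^ N * T (A + 1) B (1 + A - B) N) atTop (𝓝 0) := by
    have h3 : Tendsto (fun N : ℕ => T (A + 1) B (1 + A - B) N) atTop (𝓝 0) := by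
      refine (T_bound (A + 1) B hc).trans_tendsto (rpow_tendsto ?_)
      simp; linarith
    rw [tendsto_zero_iff_norm_tendsto_zero] at h3 ⊢
    simpa using h3
  have z := (((tendsto_ratio B (1 + A - B)).mul (tendsto_inv_lin (1 + A - B + 1))).mul w).const_mul
    ((B - 1) * (1 + A - B) * (2 + A - B))
  simp only [mul_zero] at z
  have := tendsto_nhds_unique t (z.congr fun N => (kumA_tel A B hc hA1 N).symm)
  rw [(s1.mul_left _).tsum_sub (s2.mul_left _), tsum_mul_left, tsum_mul_left] at this
  linear_combination this

lemma P_ratio_bound (z w : ℂ) (h : ∀ j : ℕ, ‖z + j‖ ≤ ‖w + j‖) (k : ℕ) : ‖P z k‖ ≤ ‖P w k‖ := by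
  simp only [P, norm_prod]
  exact Finset.prod_le_prod (fun _ _ => norm_nonneg _) fun j _ => h j

lemma norm_le_shift (w : ℂ) (hw : 0 < w.re) (y : ℝ) :
    ∃ R : ℝ, ∀ z : ℂ, z.im = y → R ≤ z.re → ‖z‖ ≤ ‖z + w‖ := by
  refine ⟨|y * w.im| / w.re, fun z hz hR => ?_⟩
  rw [div_le_iff₀ hw] at hR
  have h1 := neg_abs_le (y * w.im)
  rw [Complex.norm_def, Complex.norm_def]
  apply Real.sqrt_le_sqrt
  rw [normSq_apply, normSq_apply, add_re, add_im, hz]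
  nlinarith [sq_nonneg w.re, sq_nonneg w.im]

lemma kum_lim (A B : ℂ) (hB : B.re < 0) :
    Tendsto (fun m : ℕ => ∑' k, U (A + 2 * m) B k) atTop
      (𝓝 (∑' k : ℕ, (-1) ^ k * (P B k / k.factorial))) := by
  have P1 : ∀ k : ℕ, P 1 k = k.factorial := fun k => by
    induction k with
    | zero => simp [P]
    | succ k ih => rw [P_succ, ih, Nat.factorial_succ]; push_cast; ring
  have hs : Summable (fun k : ℕ => ‖P B k / (k.factorial : ℂ)‖) := by
    have := (T_summable 1 B (c := 1) (good_of_re (by simp)) (by simpa using hB)).norm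
    refine this.congr fun k => ?_
    have hf : (k.factorial : ℂ) ≠ 0 := Nat.cast_ne_zero.mpr k.factorial_ne_zero
    rw [T, P1]
    congr 1
    field_simp
  refine tendsto_tsum_of_dominated_convergence hs ?_ ?_
  · intro k
    have h2 : Tendsto (fun m : ℕ => 2 * m) atTop atTop :=
      tendsto_id.const_mul_atTop' (by norm_num)
    have : Tendsto (fun m : ℕ => ∏ j ∈ Finset.range k,
        (A + j + (2 * m : ℕ)) / (1 + A - B + j + (2 * m : ℕ))) atTop
        (𝓝 (∏ j ∈ Finset.range k, 1)) :=
      tendsto_finsetProd _ fun j _ => (tendsto_ratio (A + j) (1 + A - B + j)).comp h2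
    have := this.const_mul ((-1) ^ k * (P B k / k.factorial))
    rw [Finset.prod_const_one, mul_one] at this
    refine this.congr fun m => ?_
    rw [U, T, P.eq_def (A + _), P.eq_def (1 + _ - _), Finset.prod_div_distrib]
    have r1 : ∀ j : ℕ, A + j + (2 * m : ℕ) = A + 2 * m + j := fun j => by push_cast; ring
    have r2 : ∀ j : ℕ, 1 + A - B + j + (2 * m : ℕ) = 1 + (A + 2 * m) - B + j :=
      fun j => by push_cast; ring
    simp only [r1, r2]
    ring
  · obtain ⟨R, hR⟩ := norm_le_shift (1 - B) (by simp; linarith) A.im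
    obtain ⟨m0, hm0⟩ := exists_nat_ge (R - A.re)
    filter_upwards [eventually_ge_atTop m0] with m hm k
    have hm' : (m0 : ℝ) ≤ m := by exact_mod_cast hm
    have hb := P_ratio_bound (A + 2 * m) (1 + (A + 2 * m) - B) (fun j => by
      have hj : (0 : ℝ) ≤ j := Nat.cast_nonneg j
      have h0 : (0 : ℝ) ≤ m := Nat.cast_nonneg m
      have := hR (A + 2 * m + j) (by simp) (by simp; linarith)
      convert this using 2
      ring) k
    simp only [U, T, norm_mul, norm_div, norm_pow, norm_neg, norm_one, one_pow, one_mul]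
    have h5 : ‖P (A + 2 * m) k‖ / ‖P (1 + (A + 2 * m) - B) k‖ ≤ 1 :=
      div_le_one_of_le₀ hb (norm_nonneg _)
    calc _ = ‖P (A + 2 * m) k‖ / ‖P (1 + (A + 2 * m) - B) k‖ *
          (‖P B k‖ / ‖(k.factorial : ℂ)‖) := by ring
      _ ≤ 1 * (‖P B k‖ / ‖(k.factorial : ℂ)‖) := by gcongr
      _ = _ := one_mul _

/-- Kummer closed form -/
noncomputable def KG (A B : ℂ) : ℂ :=
  Gamma (1 + A - B) * Gamma (1 + A / 2) / (Gamma (1 + A) * Gamma (1 + A / 2 - B))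

lemma KG_stepB {A B : ℂ} (hc : Good (1 + A - B)) (h1 : Good (1 + A / 2 - B)) :
    (1 + A - B) * KG A B = (1 + A / 2 - B) * KG A (B - 1) := by
  have e1 : 1 + A - (B - 1) = (1 + A - B) + 1 := by ring
  have e2 : 1 + A / 2 - (B - 1) = (1 + A / 2 - B) + 1 := by ring
  rw [KG, KG, e1, e2, Gamma_add_one _ hc.ne, Gamma_add_one _ h1.ne]
  have := h1.Gamma_ne
  have := h1.ne
  rw [← mul_div_assoc, ← mul_div_assoc, mul_left_comm (Gamma (1 + A)),
    mul_div_mul_left _ _ (by assumption)]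
  ring

lemma KG_stepA {A B : ℂ} (hc : Good (1 + A - B)) (h1 : Good (1 + A / 2 - B))
    (h2 : Good (1 + A)) (h3 : Good (1 + A / 2)) :
    (1 + A - B) * (2 + A - B) * KG A B = (1 + A) * (2 + A - 2 * B) * KG (A + 2) B := by
  have e1 : 1 + (A + 2) - B = (1 + A - B) + 1 + 1 := by ring
  have e2 : 1 + (A + 2) / 2 - B = (1 + A / 2 - B) + 1 := by ring
  have e3 : 1 + (A + 2) = 1 + A + 1 + 1 := by ring
  have e4 : 1 + (A + 2) / 2 = 1 + A / 2 + 1 := by ring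
  rw [KG, KG, e1, e2, e3, e4, Gamma_add_one _ hc.add_one.ne, Gamma_add_one _ hc.ne,
    Gamma_add_one _ h1.ne, Gamma_add_one _ h2.add_one.ne, Gamma_add_one _ h2.ne,
    Gamma_add_one _ h3.ne]
  have g1 := h1.Gamma_ne
  have g2 := h2.Gamma_ne
  have n1 := h1.ne
  have n2 := h2.ne
  have n3 := h2.add_one.ne
  rw [← mul_div_assoc, ← mul_div_assoc, div_eq_div_iff (by positivity) (by positivity)]
  ring

lemma two_mul_tendsto : Tendsto (fun m : ℕ => 2 * m) atTop atTop :=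
  tendsto_id.const_mul_atTop' (by norm_num)

lemma KG_lim {A B : ℂ} (hc : Good (1 + A - B)) (h1 : Good (1 + A / 2 - B))
    (h2 : Good (1 + A)) (h3 : Good (1 + A / 2)) :
    Tendsto (fun m : ℕ => KG (A + 2 * m) B) atTop (𝓝 (2 ^ (-B))) := by
  have := ((((tendsto_Gam hc).comp two_mul_tendsto).mul (tendsto_Gam h3)).div
    (((tendsto_Gam h2).comp two_mul_tendsto).mul (tendsto_Gam h1)) (by simp)).const_mul
    ((2 : ℂ) ^ (-B))
  simp only [mul_one, div_one] at this
  refine this.congr' ?_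
  filter_upwards [eventually_ne_atTop 0] with n hn
  have hn' : (n : ℂ) ≠ 0 := Nat.cast_ne_zero.mpr hn
  have hf : (n.factorial : ℂ) ≠ 0 := Nat.cast_ne_zero.mpr n.factorial_ne_zero
  have hf2 : ((2 * n).factorial : ℂ) ≠ 0 := Nat.cast_ne_zero.mpr (2 * n).factorial_ne_zero
  have nz : ∀ x : ℂ, (n : ℂ) ^ x ≠ 0 := fun x => by simp [cpow_eq_zero_iff, hn']
  have nz2 : ∀ x : ℂ, (2 : ℂ) ^ x ≠ 0 := fun x => by simp [cpow_eq_zero_iff]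
  have g1 := (h1.add n).Gamma_ne
  have g2 := (h2.add (2 * n)).Gamma_ne
  have e1 : 1 + (A + 2 * n) - B = (1 + A - B) + (2 * n : ℕ) := by push_cast; ring
  have e2 : 1 + (A + 2 * n) / 2 - B = (1 + A / 2 - B) + n := by ring
  have e3 : 1 + (A + 2 * n) = 1 + A + (2 * n : ℕ) := by push_cast; ring
  have e4 : 1 + (A + 2 * n) / 2 = 1 + A / 2 + n := by ring
  have m : ∀ x : ℂ, ((2 * n : ℕ) : ℂ) ^ x = 2 ^ x * (n : ℂ) ^ x := fun x => by
    rw [Nat.cast_mul, Complex.natCast_mul_natCast_cpow]; norm_num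
  simp only [Pi.div_apply, Function.comp_def, KG]
  rw [e1, e2, e3, e4, m, m]
  generalize Gamma (1 + A - B + (2 * n : ℕ)) = G1
  generalize Gamma (1 + A / 2 + n) = G2
  generalize Gamma (1 + A + (2 * n : ℕ)) = G3 at *
  generalize Gamma (1 + A / 2 - B + n) = G4 at *
  have p1 : (2 : ℂ) ^ (1 + A - 1) = 2 ^ (1 + A - B - 1) * 2 ^ B := by
    rw [← cpow_add _ _ two_ne_zero]; congr 1; ring
  have p2 : (n : ℂ) ^ (1 + A - 1) = (n : ℂ) ^ (1 + A - B - 1) * (n : ℂ) ^ B := by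
    rw [← cpow_add _ _ hn']; congr 1; ring
  have p3 : (n : ℂ) ^ (1 + A / 2 - 1) = (n : ℂ) ^ (1 + A / 2 - B - 1) * (n : ℂ) ^ B := by
    rw [← cpow_add _ _ hn']; congr 1; ring
  rw [p1, p2, p3, cpow_neg]
  have := nz B
  have := nz (1 + A - B - 1)
  have := nz (1 + A / 2 - B - 1)
  have := nz2 B
  have := nz2 (1 + A - B - 1)
  generalize (n : ℂ) ^ B = x1 at *
  generalize (n : ℂ) ^ (1 + A - B - 1) = x2 at *
  generalize (n : ℂ) ^ (1 + A / 2 - B - 1) = x3 at *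
  generalize (2 : ℂ) ^ B = x4 at *
  generalize (2 : ℂ) ^ (1 + A - B - 1) = x5 at *
  field_simp

lemma kum_chain (B : ℂ) (hB : B.re < 0) (n : ℕ) : ∀ {A : ℂ} (_ : Good (1 + A - B))
    (_ : Good (1 + A / 2 - B)) (_ : Good (1 + A)) (_ : Good (1 + A / 2)),
    (∑' k, U A B k) * KG (A + 2 * n) B = (∑' k, U (A + 2 * n) B k) * KG A B := by
  induction n with
  | zero => intro A _ _ _ _; simp [mul_comm]
  | succ n ih =>
    intro A hc h1 h2 h3
    have a1 := kumA_step A B hc h2.ne (by linarith)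
    have a2 := KG_stepA hc h1 h2 h3
    have e1 : 1 + (A + 2) - B = (1 + A - B) + 1 + 1 := by ring
    have e2 : 1 + (A + 2) / 2 - B = (1 + A / 2 - B) + 1 := by ring
    have e3 : 1 + (A + 2) = 1 + A + 1 + 1 := by ring
    have e4 : 1 + (A + 2) / 2 = 1 + A / 2 + 1 := by ring
    have := ih (A := A + 2) (by rw [e1]; exact hc.add_one.add_one) (by rw [e2]; exact h1.add_one)
      (by rw [e3]; exact h2.add_one.add_one) (by rw [e4]; exact h3.add_one)
    have e : A + 2 * ((n + 1 : ℕ) : ℂ) = A + 2 + 2 * n := by push_cast; ring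
    rw [e]
    have e5 : 2 + A - B = 1 + A - B + 1 := by ring
    have nz : (1 + A - B) * (2 + A - B) ≠ 0 := mul_ne_zero hc.ne (e5 ▸ hc.add_one.ne)
    apply mul_left_cancel₀ nz
    linear_combination KG (A + 2 + 2 * n) B * a1 - (∑' k, U (A + 2 + 2 * n) B k) * a2
      + (1 + A) * (2 + A - 2 * B) * this

lemma kum_prop {A B : ℂ} (hB : B.re < 0) (hc : Good (1 + A - B)) (h1 : Good (1 + A / 2 - B))
    (h2 : Good (1 + A)) (h3 : Good (1 + A / 2)) :
    (∑' k, U A B k) * 2 ^ (-B) = (∑' k : ℕ, (-1) ^ k * (P B k / k.factorial)) * KG A B := by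
  have t1 := (KG_lim hc h1 h2 h3).const_mul (∑' k, U A B k)
  have t2 := (kum_lim A B hB).mul_const (KG A B)
  exact tendsto_nhds_unique (t1.congr fun n => kum_chain B hB n hc h1 h2 h3) t2

lemma kummer_neg {A B : ℂ} (hB : B.re < 0) (hc : Good (1 + A - B)) (h1 : Good (1 + A / 2 - B))
    (h2 : Good (1 + A)) (h3 : Good (1 + A / 2)) : ∑' k, U A B k = KG A B := by
  have g : Good (1 + 0 - B) := good_of_re (by simp; linarith)
  have g' : Good (1 + 0 / 2 - B) := good_of_re (by simp; linarith)
  have k0 := kum_prop (A := 0) hB g g' (good_of_re (by simp)) (good_of_re (by simp))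
  have e : ∑' k, U 0 B k = 1 := by
    rw [tsum_eq_single 0]
    · simp [U, T, P]
    · intro k hk
      obtain ⟨j, rfl⟩ := Nat.exists_eq_succ_of_ne_zero hk
      simp [U, T, P_succ']
  have e' : KG 0 B = 1 := by
    have := g.Gamma_ne
    simp only [add_zero] at this
    simp [KG, this]
  rw [e, e', one_mul, mul_one] at k0
  have k1 := kum_prop hB hc h1 h2 h3
  rw [← k0, mul_comm] at k1
  exact mul_left_cancel₀ (by simp [cpow_eq_zero_iff]) k1

theorem kummer {A B : ℂ} (hB : B.re < 1 / 2) (hc : Good (1 + A - B)) (h1 : Good (1 + A / 2 - B))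
    (h2 : Good (1 + A)) (h3 : Good (1 + A / 2)) : ∑' k, U A B k = KG A B := by
  have e1 : 1 + A - (B - 1) = (1 + A - B) + 1 := by ring
  have e2 : 1 + A / 2 - (B - 1) = (1 + A / 2 - B) + 1 := by ring
  have := kummer_neg (A := A) (B := B - 1) (by simp; linarith) (by rw [e1]; exact hc.add_one)
    (by rw [e2]; exact h1.add_one) h2 h3
  apply mul_left_cancel₀ hc.ne
  rw [kumB_step A B hc hB, KG_stepB hc h1, this]

lemma P_one (k : ℕ) : P 1 k = k.factorial := by
  induction k with
  | zero => simp [P]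
  | succ k ih => rw [P_succ, ih, Nat.factorial_succ]; push_cast; ring

lemma P_dup (x : ℂ) (k : ℕ) : P (2 * x) (2 * k) = 4 ^ k * (P x k * P (x + 1 / 2) k) := by
  induction k with
  | zero => simp [P]
  | succ k ih =>
    rw [show 2 * (k + 1) = 2 * k + 1 + 1 by ring, P_succ, P_succ, ih, P_succ, P_succ]
    push_cast
    ring

lemma coeff_eq (a b : ℂ) (k : ℕ) :
    hypCoeff ![a, a + 1 / 2, b, b + 1 / 2] ![1, 1 / 2, 1 / 2 + a - b, 1 + a - b] k * (1 : ℂ) ^ k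
      = T (2 * a) (2 * b) (1 + 2 * a - 2 * b) (2 * k) := by
  have d1 := P_dup a k
  have d2 := P_dup b k
  have d3 := P_dup (1 / 2) k
  have d4 := P_dup (1 / 2 + a - b) k
  rw [show (2 : ℂ) * (1 / 2) = 1 by norm_num, P_one,
    show (1 / 2 + 1 / 2 : ℂ) = 1 by norm_num] at d3
  rw [show 2 * (1 / 2 + a - b) = 1 + 2 * a - 2 * b by ring,
    show 1 / 2 + a - b + 1 / 2 = 1 + a - b by ring] at d4
  rw [T, d1, d2, d3, d4, hypCoeff]
  simp only [eval_eq, Fin.prod_univ_four, one_pow, mul_one]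
  simp only [Matrix.cons_val]
  have h4 : (4 : ℂ) ^ k * 4 ^ k ≠ 0 := by simp
  rw [show ∀ x y z w u : ℂ, u * (x * y) * (u * (z * w)) = (u * u) * (x * y * z * w) from
    fun x y z w u => by ring, show ∀ x y z w u : ℂ, u * (x * y) * (u * (z * w)) =
    (u * u) * (w * z * x * y) from fun x y z w u => by ring, mul_div_mul_left _ _ h4]

lemma good_of_not {x : ℂ} (h : ¬ IsNonposInt x) : Good x := fun k hk =>
  h ⟨k, by linear_combination hk⟩

end Kum

end KumSection

theorem stmt12 (a b : ℂ) (hb : b.re < 1 / 4)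
    (h1 : ∀ k : ℕ, 1 / 2 + a - b + k ≠ 0) (h2 : ∀ k : ℕ, 1 + a - b + k ≠ 0)
    (h3 : ¬ IsNonposInt (1 + 2 * a - 2 * b)) (h4 : ¬ IsNonposInt (1 - 4 * b))
    (h5 : ¬ IsNonposInt (1 - 2 * b)) (h6 : ¬ IsNonposInt (1 + 2 * a - 4 * b))
    (h7 : ¬ IsNonposInt (1 + a)) (h8 : ¬ IsNonposInt (1 + 2 * a))
    (h9 : ¬ IsNonposInt (1 + a - 2 * b)) :
    Summable (fun k : ℕ =>
      hypCoeff ![a, a + 1 / 2, b, b + 1 / 2] ![1, 1 / 2, 1 / 2 + a - b, 1 + a - b] k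
        * (1 : ℂ) ^ k) ∧
    cHyp ![a, a + 1 / 2, b, b + 1 / 2] ![1, 1 / 2, 1 / 2 + a - b, 1 + a - b] 1
      = (1 / 2) *
          (Gamma (1 + 2 * a - 2 * b) * Gamma (1 - 4 * b)
              / (Gamma (1 - 2 * b) * Gamma (1 + 2 * a - 4 * b))
            + Gamma (1 + 2 * a - 2 * b) * Gamma (1 + a)
              / (Gamma (1 + 2 * a) * Gamma (1 + a - 2 * b))) := by
  have g3 := Kum.good_of_not h3
  have hB : (2 * b).re < 1 / 2 := by
    simp
    linarith
  have e4 : 1 + 2 * a - 2 * b - 2 * a - 2 * b = 1 - 4 * b := by ring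
  have e5 : 1 + 2 * a - 2 * b - 2 * a = 1 - 2 * b := by ring
  have e6 : 1 + 2 * a - 2 * b - 2 * b = 1 + 2 * a - 4 * b := by ring
  have e7 : 1 + 2 * a / 2 = 1 + a := by ring
  have hre : 0 < (1 + 2 * a - 2 * b - 2 * a - 2 * b).re := by
    rw [e4]
    simp
    linarith
  have G := Kum.gauss (2 * a) (2 * b) g3 hre (by rw [e5]; exact Kum.good_of_not h5)
    (by rw [e6]; exact Kum.good_of_not h6)
  have K := Kum.kummer (A := 2 * a) (B := 2 * b) hB g3 (by rw [e7]; exact Kum.good_of_not h9)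
    (Kum.good_of_not h8) (by rw [e7]; exact Kum.good_of_not h7)
  have s1 := Kum.T_summable (2 * a) (2 * b) g3 hre
  have s2 := Kum.U_summable (2 * a) g3 hB
  have se : Summable (fun k : ℕ => Kum.T (2 * a) (2 * b) (1 + 2 * a - 2 * b) (2 * k)) :=
    s1.comp_injective (fun x y h => by simpa using h)
  have so : Summable (fun k : ℕ => Kum.T (2 * a) (2 * b) (1 + 2 * a - 2 * b) (2 * k + 1)) :=
    s1.comp_injective (fun x y h => by simpa using h)
  have t1 := tsum_even_add_odd se so
  have t2 := (HasSum.even_add_odd (f := Kum.U (2 * a) (2 * b))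
    (by simpa [Kum.U, pow_mul] using se.hasSum)
    (by simpa [Kum.U, pow_mul, pow_succ] using so.hasSum.neg)).tsum_eq
  refine ⟨se.congr fun k => (Kum.coeff_eq a b k).symm, ?_⟩
  rw [cHyp]
  simp only [Kum.coeff_eq]
  rw [G] at t1
  rw [K] at t2
  rw [Kum.GG, e4, e5, e6] at t1
  rw [Kum.KG, e7] at t2
  linear_combination (1 / 2 : ℂ) * t1 - (1 / 2 : ℂ) * t2
end

section
/- Let a ∈ ℂ be such that 2a is not a nonzero integer, and assume none of the numbers 3/4 − 2a, 3/4 + 2a, a + 5/8, a + 7/8, −a + 5/8, −a + 7/8 is a nonpositive integer. Then _6F_6[1/4, 3/4, 1/4 + a, 3/4 + a, 1/4 − a, 3/4 − a; 1, 1/2, 1 − a, 1/2 − a, 1 + a, 1/2 + a | 1] = ( Γ(1 + 2a) Γ(1 − 2a) / (4π) ) · [ Γ(1/4)^2 / ( Γ(3/4 − 2a) Γ(3/4 + 2a) ) + √2 · π^2 / ( Γ(a + 5/8) Γ(a + 7/8) Γ(−a + 5/8) Γ(−a + 7/8) ) ], the series on the left converging. -/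
open Complex

section

open Filter Topology Asymptotics Finset

noncomputable def pp (x : ℂ) (k : ℕ) : ℂ := (ascPochhammer ℂ k).eval x

lemma pp_zero (x : ℂ) : pp x 0 = 1 := by simp [pp]

lemma pp_succ (x : ℂ) (k : ℕ) : pp x (k + 1) = pp x k * (x + k) := by
  simp [pp, ascPochhammer_succ_eval]

lemma pp_shift (x : ℂ) (k : ℕ) : x * pp (x + 1) k = pp x k * (x + k) := by
  induction k with
  | zero => simp [pp_zero]
  | succ k ih =>
    rw [pp_succ, pp_succ, ← mul_assoc, ih]
    push_cast; ring

lemma pp_eq_prod (x : ℂ) (k : ℕ) : pp x k = ∏ j ∈ range k, (x + j) := by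
  induction k with
  | zero => simp [pp_zero]
  | succ k ih => rw [pp_succ, prod_range_succ, ih]

lemma pp_ne_zero {x : ℂ} (hx : ∀ j : ℕ, x + j ≠ 0) (k : ℕ) : pp x k ≠ 0 := by
  rw [pp_eq_prod]; exact prod_ne_zero_iff.2 fun j _ => hx j

lemma pp_one (k : ℕ) : pp 1 k = (k.factorial : ℂ) := by
  induction k with
  | zero => simp [pp_zero]
  | succ k ih => rw [pp_succ, ih, Nat.factorial_succ]; push_cast; ring

lemma pp_gammaSeq (x : ℂ) (hx : ∀ j : ℕ, x + j ≠ 0) (n : ℕ) :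
    pp x (n + 1) * GammaSeq x n = (n : ℂ) ^ x * n.factorial := by
  have := pp_ne_zero hx (n+1)
  rw [GammaSeq, ← pp_eq_prod]
  field_simp

lemma Gamma_ne_zero' (x : ℂ) (hx : ∀ j : ℕ, x + j ≠ 0) : Gamma x ≠ 0 := by
  apply Complex.Gamma_ne_zero
  intro m h
  exact hx m (by rw [h]; ring)

lemma pp_isBigO (x : ℂ) :
    (fun n : ℕ => pp x (n + 1)) =O[atTop] (fun n : ℕ => (n : ℝ) ^ x.re * n.factorial) := by
  by_cases hx : ∀ j : ℕ, x + j ≠ 0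
  · have h1 : Tendsto (fun n => (GammaSeq x n)⁻¹) atTop (𝓝 (Gamma x)⁻¹) :=
      (GammaSeq_tendsto_Gamma x).inv₀ (Gamma_ne_zero' x hx)
    have h2 := (h1.isBigO_one ℂ).mul (isBigO_refl (fun n : ℕ => (n : ℂ) ^ x * n.factorial) atTop)
    have h3 : (fun n : ℕ => pp x (n + 1)) =ᶠ[atTop]
        (fun n : ℕ => (GammaSeq x n)⁻¹ * ((n : ℂ) ^ x * n.factorial)) := by
      have := (GammaSeq_tendsto_Gamma x).eventually_ne (Gamma_ne_zero' x hx)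
      filter_upwards [this] with n hn
      rw [← pp_gammaSeq x hx n]; field_simp
    refine h3.trans_isBigO (h2.trans ?_)
    refine IsBigO.of_bound 1 ?_
    filter_upwards [eventually_gt_atTop 0] with n hn
    simp [norm_natCast_cpow_of_pos hn]
    apply le_of_eq
    rw [abs_of_nonneg]; positivity
  · push Not at hx
    obtain ⟨j, hj⟩ := hx
    have : (fun n : ℕ => pp x (n + 1)) =ᶠ[atTop] fun _ => 0 := by
      filter_upwards [eventually_ge_atTop j] with n hn
      rw [pp_eq_prod]
      exact prod_eq_zero (mem_range.2 (Nat.lt_succ_of_le hn)) hj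
    exact this.trans_isBigO (isBigO_zero _ _)

lemma pp_inv_isBigO (x : ℂ) (hx : ∀ j : ℕ, x + j ≠ 0) :
    (fun n : ℕ => (pp x (n + 1))⁻¹) =O[atTop]
      (fun n : ℕ => ((n : ℝ) ^ x.re * n.factorial)⁻¹) := by
  have h1 := GammaSeq_tendsto_Gamma x
  have h2 := (h1.isBigO_one ℂ).mul
    (isBigO_refl (fun n : ℕ => ((n : ℂ) ^ x * n.factorial)⁻¹) atTop)
  have h3 : (fun n : ℕ => (pp x (n + 1))⁻¹) =ᶠ[atTop]
      (fun n : ℕ => (GammaSeq x n) * ((n : ℂ) ^ x * n.factorial)⁻¹) := by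
    have := (GammaSeq_tendsto_Gamma x).eventually_ne (Gamma_ne_zero' x hx)
    filter_upwards [this] with n hn
    rw [← pp_gammaSeq x hx n]
    have := pp_ne_zero hx (n+1)
    field_simp
  refine h3.trans_isBigO (h2.trans ?_)
  refine IsBigO.of_bound 1 ?_
  filter_upwards [eventually_gt_atTop 0] with n hn
  simp [norm_natCast_cpow_of_pos hn]
  apply le_of_eq
  rw [abs_of_nonneg]; positivity

lemma ratio_isBigO (x₁ x₂ x₃ y₁ y₂ y₃ : ℂ) (h₁ : ∀ j : ℕ, y₁ + j ≠ 0) (h₂ : ∀ j : ℕ, y₂ + j ≠ 0)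
    (h₃ : ∀ j : ℕ, y₃ + j ≠ 0) (s : ℝ)
    (hs : (x₁ + x₂ + x₃ - y₁ - y₂ - y₃).re = s) :
    (fun n : ℕ => pp x₁ (n + 1) * pp x₂ (n + 1) * pp x₃ (n + 1) /
      (pp y₁ (n + 1) * pp y₂ (n + 1) * pp y₃ (n + 1))) =O[atTop] (fun n : ℕ => (n : ℝ) ^ s) := by
  have H := ((((((pp_isBigO x₁).mul (pp_isBigO x₂)).mul (pp_isBigO x₃)).mul
    (pp_inv_isBigO y₁ h₁)).mul (pp_inv_isBigO y₂ h₂)).mul (pp_inv_isBigO y₃ h₃))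
  refine (H.congr_left ?_).trans ?_
  · intro n; rw [div_eq_mul_inv, mul_inv, mul_inv]; ring
  · refine IsBigO.of_bound 1 ?_
    filter_upwards [eventually_gt_atTop 0] with n hn
    have hn' : (0:ℝ) < n := by exact_mod_cast hn
    rw [one_mul]
    apply le_of_eq
    congr 1
    rw [← hs]
    simp only [add_re, sub_re]
    rw [Real.rpow_sub hn', Real.rpow_sub hn', Real.rpow_sub hn', Real.rpow_add hn',
      Real.rpow_add hn']
    have : (n.factorial : ℝ) ≠ 0 := by positivity
    field_simp

lemma ratio_summable (x₁ x₂ x₃ y₁ y₂ y₃ : ℂ) (h₁ : ∀ j : ℕ, y₁ + j ≠ 0)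
    (h₂ : ∀ j : ℕ, y₂ + j ≠ 0)
    (h₃ : ∀ j : ℕ, y₃ + j ≠ 0) (hs : (x₁ + x₂ + x₃ - y₁ - y₂ - y₃).re < -1) :
    Summable (fun n : ℕ => pp x₁ n * pp x₂ n * pp x₃ n / (pp y₁ n * pp y₂ n * pp y₃ n)) := by
  rw [← summable_nat_add_iff 1]
  exact summable_of_isBigO_nat (Real.summable_nat_rpow.2 hs)
    (ratio_isBigO x₁ x₂ x₃ y₁ y₂ y₃ h₁ h₂ h₃ _ rfl)

/-- one factor of the gamma limit -/
lemma pp_ratio_eq (x y : ℂ) (hx : ∀ j : ℕ, x + j ≠ 0) (hy : ∀ j : ℕ, y + j ≠ 0) :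
    ∀ᶠ n : ℕ in atTop, pp x (n + 1) / pp y (n + 1) =
      GammaSeq y n / GammaSeq x n * (n : ℂ) ^ (x - y) := by
  have h1 := (GammaSeq_tendsto_Gamma x).eventually_ne (Gamma_ne_zero' x hx)
  filter_upwards [h1, eventually_gt_atTop 0] with n hn hn0
  have hn' : (n : ℂ) ≠ 0 := by exact_mod_cast hn0.ne'
  have e1 := pp_gammaSeq x hx n
  have e2 := pp_gammaSeq y hy n
  have p2 := pp_ne_zero hy (n+1)
  have f : (n.factorial : ℂ) ≠ 0 := by exact_mod_cast n.factorial_ne_zero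
  have c2 : (n : ℂ) ^ y ≠ 0 := by simp [cpow_eq_zero_iff, hn']
  rw [cpow_sub _ _ hn', div_mul_div_comm, div_eq_div_iff p2 (mul_ne_zero hn c2)]
  apply mul_right_cancel₀ f
  linear_combination (n:ℂ)^y * n.factorial * e1 - (n:ℂ)^x * n.factorial * e2

lemma pp_ratio4 (x₁ x₂ x₃ x₄ y₁ y₂ y₃ y₄ : ℂ)
    (hx₁ : ∀ j : ℕ, x₁ + j ≠ 0) (hx₂ : ∀ j : ℕ, x₂ + j ≠ 0)
    (hx₃ : ∀ j : ℕ, x₃ + j ≠ 0) (hx₄ : ∀ j : ℕ, x₄ + j ≠ 0)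
    (hy₁ : ∀ j : ℕ, y₁ + j ≠ 0) (hy₂ : ∀ j : ℕ, y₂ + j ≠ 0)
    (hy₃ : ∀ j : ℕ, y₃ + j ≠ 0) (hy₄ : ∀ j : ℕ, y₄ + j ≠ 0)
    (hs : x₁ + x₂ + x₃ + x₄ = y₁ + y₂ + y₃ + y₄) :
    Tendsto (fun n : ℕ => pp x₁ n / pp y₁ n * (pp x₂ n / pp y₂ n) *
      (pp x₃ n / pp y₃ n) * (pp x₄ n / pp y₄ n)) atTop
      (𝓝 (Gamma y₁ / Gamma x₁ * (Gamma y₂ / Gamma x₂) * (Gamma y₃ / Gamma x₃) *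
        (Gamma y₄ / Gamma x₄))) := by
  rw [← tendsto_add_atTop_iff_nat 1]
  have T : ∀ x y : ℂ, (∀ j : ℕ, x + j ≠ 0) →
      Tendsto (fun n => GammaSeq y n / GammaSeq x n) atTop (𝓝 (Gamma y / Gamma x)) :=
    fun x y hx => (GammaSeq_tendsto_Gamma y).div (GammaSeq_tendsto_Gamma x) (Gamma_ne_zero' x hx)
  refine ((((T x₁ y₁ hx₁).mul (T x₂ y₂ hx₂)).mul (T x₃ y₃ hx₃)).mul (T x₄ y₄ hx₄)).congr' ?_
  filter_upwards [pp_ratio_eq x₁ y₁ hx₁ hy₁, pp_ratio_eq x₂ y₂ hx₂ hy₂,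
    pp_ratio_eq x₃ y₃ hx₃ hy₃, pp_ratio_eq x₄ y₄ hx₄ hy₄, eventually_gt_atTop 0]
    with n h1 h2 h3 h4 hn
  have hn' : (n : ℂ) ≠ 0 := by exact_mod_cast hn.ne'
  rw [h1, h2, h3, h4]
  have : (n : ℂ) ^ (x₁ - y₁) * (n : ℂ) ^ (x₂ - y₂) * (n : ℂ) ^ (x₃ - y₃) *
      (n : ℂ) ^ (x₄ - y₄) = 1 := by
    rw [← cpow_add _ _ hn', ← cpow_add _ _ hn', ← cpow_add _ _ hn']
    have : x₁ - y₁ + (x₂ - y₂) + (x₃ - y₃) + (x₄ - y₄) = 0 := by linear_combination hs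
    rw [this, cpow_zero]
  linear_combination (-(GammaSeq y₁ n / GammaSeq x₁ n * (GammaSeq y₂ n / GammaSeq x₂ n) *
    (GammaSeq y₃ n / GammaSeq x₃ n) * (GammaSeq y₄ n / GammaSeq x₄ n))) * this

lemma pp_shift2 (x : ℂ) (k : ℕ) :
    x * (x + 1) * pp (x + 2) k = pp x k * (x + k) * (x + 1 + k) := by
  have h1 := pp_shift x k
  have h2 := pp_shift (x + 1) k
  rw [show x + 1 + 1 = x + 2 by ring] at h2
  linear_combination x * h2 + (x + 1 + k) * h1

noncomputable def uu (b B C : ℂ) (N k : ℕ) : ℂ :=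
  pp (1 / 2 + 2 * N) k * pp B k * pp C k /
    (pp 1 k * pp (1 - b + 2 * N) k * pp (1 + b + 2 * N) k)

lemma one_add_nat_ne (j : ℕ) : (1 : ℂ) + j ≠ 0 := by
  have : ((1 + j : ℕ) : ℂ) ≠ 0 := by norm_cast; omega
  simpa using this

lemma half_ne (N j : ℕ) : (1 / 2 + 2 * N : ℂ) + j ≠ 0 := by
  intro h
  have := congrArg Complex.re h
  simp at this
  have h1 : (0:ℝ) ≤ N := by positivity
  have h2 : (0:ℝ) ≤ j := by positivity
  linarith

lemma sh_ne {c : ℂ} (hc : ∀ j : ℕ, c + j ≠ 0) (N j : ℕ) : c + 2 * N + j ≠ 0 := by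
  have := hc (2 * N + j)
  push_cast at this
  rwa [← add_assoc] at this

lemma uu_zero (b B C : ℂ) (N : ℕ) : uu b B C N 0 = 1 := by simp [uu, pp_zero]

lemma uu_succ (b B C : ℂ) (N k : ℕ) : uu b B C N (k + 1) = uu b B C N k *
    ((B + k) * (C + k) / (1 + k) * ((1 / 2 + 2 * N + k) /
      ((1 - b + 2 * N + k) * (1 + b + 2 * N + k)))) := by
  simp only [uu, pp_succ]
  rw [div_mul_div_comm, div_mul_div_comm]
  congr 1 <;> ring

section
variable {b B C : ℂ}

lemma uu_shift (hm : ∀ j : ℕ, 1 - b + j ≠ 0) (hp : ∀ j : ℕ, 1 + b + j ≠ 0)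
    (N k : ℕ) : uu b B C (N + 1) k = uu b B C N k *
    ((1 / 2 + 2 * N + k) * (1 / 2 + 2 * N + 1 + k) / ((1 / 2 + 2 * N) * (1 / 2 + 2 * N + 1)) *
    ((1 - b + 2 * N) * (1 - b + 2 * N + 1) * ((1 + b + 2 * N) * (1 + b + 2 * N + 1)) /
      ((1 - b + 2 * N + k) * (1 - b + 2 * N + 1 + k) *
        ((1 + b + 2 * N + k) * (1 + b + 2 * N + 1 + k))))) := by
  have e : ∀ c : ℂ, c + 2 * ((N + 1 : ℕ) : ℂ) = c + 2 * N + 2 := by intro c; push_cast; ring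
  have sub : ∀ c : ℂ, (∀ j : ℕ, c + j ≠ 0) → pp (c + 2 * ((N + 1 : ℕ) : ℂ)) k =
      pp (c + 2 * N) k * ((c + 2 * N + k) * (c + 2 * N + 1 + k)) /
        ((c + 2 * N) * (c + 2 * N + 1)) := by
    intro c hc
    have h0 := sh_ne hc N 0
    have h1 := sh_ne hc N 1
    simp only [Nat.cast_zero, add_zero, Nat.cast_one] at h0 h1
    rw [e, eq_div_iff (mul_ne_zero h0 h1)]
    linear_combination pp_shift2 (c + 2 * N) k
  have hh : ∀ j : ℕ, (1 / 2 : ℂ) + j ≠ 0 := fun j => by simpa using half_ne 0 j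
  rw [uu, uu, sub _ hh, sub _ hm, sub _ hp]
  have q1 := pp_ne_zero (sh_ne hm N) k
  have q2 := pp_ne_zero (sh_ne hp N) k
  have q3 := pp_ne_zero one_add_nat_ne k
  have a1 := sh_ne hm N k
  have a2 := sh_ne hm N (1 + k)
  have a3 := sh_ne hm N 1
  have a4 := sh_ne hm N 0
  have b1 := sh_ne hp N k
  have b2 := sh_ne hp N (1 + k)
  have b3 := sh_ne hp N 1
  have b4 := sh_ne hp N 0
  have c3 := half_ne N 1
  have c4 := half_ne N 0
  push_cast at a2 b2 a3 b3 a4 b4 c3 c4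
  rw [← add_assoc] at a2 b2
  rw [add_zero] at a4 b4 c4
  generalize pp (1 - b + 2 * N) k = P1 at *
  generalize pp (1 + b + 2 * N) k = P2 at *
  generalize pp 1 k = P3 at *
  generalize (1 : ℂ) / 2 + 2 * N = y at *
  generalize (1 : ℂ) - b + 2 * N = e at *
  generalize (1 : ℂ) + b + 2 * N = f at *
  field_simp

lemma uu_isBigO (hm : ∀ j : ℕ, 1 - b + j ≠ 0) (hp : ∀ j : ℕ, 1 + b + j ≠ 0)
    (hBC : B + C = 1) (N : ℕ) :
    (fun k => uu b B C N (k + 1)) =O[atTop] (fun k : ℕ => (k : ℝ) ^ (-(3 / 2) - 2 * N : ℝ)) := by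
  refine ratio_isBigO _ _ _ _ _ _ one_add_nat_ne (sh_ne hm N) (sh_ne hp N) _ ?_
  rw [show (1 / 2 + 2 * N + B + C - 1 - (1 - b + 2 * N) - (1 + b + 2 * N) : ℂ) =
    ((-(3 / 2) - 2 * N : ℝ) : ℂ) by push_cast; linear_combination hBC]
  exact ofReal_re _

lemma uu_summable (hm : ∀ j : ℕ, 1 - b + j ≠ 0) (hp : ∀ j : ℕ, 1 + b + j ≠ 0)
    (hBC : B + C = 1) (N : ℕ) : Summable (uu b B C N) := by
  refine ratio_summable _ _ _ _ _ _ one_add_nat_ne (sh_ne hm N) (sh_ne hp N) ?_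
  rw [show (1 / 2 + 2 * N + B + C - 1 - (1 - b + 2 * N) - (1 + b + 2 * N) : ℂ) =
    ((-(3 / 2) - 2 * N : ℝ) : ℂ) by push_cast; linear_combination hBC]
  rw [ofReal_re]
  have h1 : (0:ℝ) ≤ N := by positivity
  linarith

end

lemma inv_tendsto (c : ℂ) : Tendsto (fun k : ℕ => (c + k)⁻¹) atTop (𝓝 0) := by
  have h : Tendsto (fun k : ℕ => c + (k : ℂ)) atTop (Bornology.cobounded ℂ) := by
    rw [← tendsto_norm_atTop_iff_cobounded]
    refine tendsto_atTop_mono (f := fun k : ℕ => (k : ℝ) + (-‖c‖)) ?_ ?_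
    · intro k
      have := norm_sub_norm_le (k : ℂ) (-c)
      simp at this
      rw [add_comm c]; linarith
    · exact tendsto_atTop_add_const_right _ _ tendsto_natCast_atTop_atTop
  exact tendsto_inv₀_cobounded.comp h

lemma inv_tendsto2 (c : ℂ) : Tendsto (fun N : ℕ => (c + 2 * N)⁻¹) atTop (𝓝 0) := by
  have := (inv_tendsto c).comp (tendsto_id.const_mul_atTop' (zero_lt_two (α := ℕ)))
  simpa [Function.comp_def] using this

section
variable {b B C : ℂ}

lemma uu_tendsto (hm : ∀ j : ℕ, 1 - b + j ≠ 0) (hp : ∀ j : ℕ, 1 + b + j ≠ 0)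
    (k : ℕ) :
    Tendsto (fun N => uu b B C N k) atTop (𝓝 (if k = 0 then 1 else 0)) := by
  induction k with
  | zero => simp [uu_zero]
  | succ k ih =>
    have key : Tendsto (fun N : ℕ => ((1 / 2 + 2 * N + k) /
      ((1 - b + 2 * N + k) * (1 + b + 2 * N + k)) : ℂ)) atTop (𝓝 0) := by
      have t1 := inv_tendsto2 (1 - b + k)
      have t2 := inv_tendsto2 (1 + b + k)
      have := ((t1.const_mul (b - 1 / 2)).const_add 1).mul t2
      rw [mul_zero] at this
      refine this.congr fun N => ?_
      have a1 := sh_ne hm N k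
      have a2 := sh_ne hp N k
      rw [show 1 - b + k + 2 * (N : ℂ) = 1 - b + 2 * N + k by ring,
        show 1 + b + k + 2 * (N : ℂ) = 1 + b + 2 * N + k by ring]
      field_simp
      ring
    have := ih.mul (key.const_mul ((B + k) * (C + k) / (1 + k)))
    simp only [mul_zero] at this
    simp only [Nat.add_eq_zero_iff, one_ne_zero, and_false, if_false]
    exact this.congr fun N => (uu_succ b B C N k).symm

lemma uu_tsum_tendsto (hm : ∀ j : ℕ, 1 - b + j ≠ 0) (hp : ∀ j : ℕ, 1 + b + j ≠ 0)
    : Tendsto (fun N => ∑' k, uu b B C N k) atTop (𝓝 1) := by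
  set L : ℝ := ‖b‖ + 1 with hL
  set M : ℝ := ‖B‖ + ‖C‖ + L with hM
  have hL1 : 1 ≤ L := by have := norm_nonneg b; linarith
  have hM1 : 1 ≤ M := by have := norm_nonneg B; have := norm_nonneg C; linarith
  let v : ℕ → ℂ := fun k => pp (‖B‖ : ℂ) k * pp (‖C‖ : ℂ) k * pp ((M + L + 1 / 2 : ℝ) : ℂ) k /
    (pp 1 k * pp ((1 + M : ℝ) : ℂ) k * pp ((1 + M : ℝ) : ℂ) k)
  have hMj : ∀ j : ℕ, ((1 + M : ℝ) : ℂ) + j ≠ 0 := by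
    intro j
    have : (1 + M + j : ℝ) ≠ 0 := by positivity
    exact_mod_cast this
  have hv : Summable v := by
    refine ratio_summable _ _ _ _ _ _ one_add_nat_ne hMj hMj ?_
    simp
    linarith
  have hvs : ∀ k, ‖v (k + 1)‖ = ‖v k‖ * ((‖B‖ + k) * (‖C‖ + k) / (1 + k) *
      ((M + L + 1 / 2 + k) / ((1 + M + k) * (1 + M + k)))) := by
    intro k
    have nn : ∀ x : ℝ, 0 ≤ x → ‖((x : ℝ) : ℂ) + k‖ = x + k := by
      intro x hx
      rw [show (x : ℂ) + k = ((x + k : ℝ) : ℂ) by push_cast; rfl, norm_real, Real.norm_eq_abs,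
        abs_of_nonneg]
      positivity
    simp only [v, pp_succ, norm_div, norm_mul]
    rw [nn _ (norm_nonneg _), nn _ (norm_nonneg _), nn (M + L + 1 / 2) (by positivity),
      nn (1 + M) (by positivity), show ‖(1:ℂ) + k‖ = 1 + k by simpa using nn 1 zero_le_one]
    rw [div_mul_div_comm, div_mul_div_comm]
    congr 1 <;> ring
  have hbd : ∀ N : ℕ, M + L ≤ 2 * N → ∀ k, ‖uu b B C N k‖ ≤ ‖v k‖ := by
    intro N hN k
    induction k with
    | zero => simp [uu_zero, v, pp_zero]
    | succ k ih =>
      rw [uu_succ, hvs, norm_mul]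
      refine mul_le_mul ih ?_ (norm_nonneg _) (norm_nonneg _)
      rw [norm_mul]
      have hk : (0:ℝ) ≤ k := by positivity
      have nk : ∀ x : ℂ, ‖x + k‖ ≤ ‖x‖ + k := fun x => by simpa using norm_add_le x (k : ℂ)
      have n1 : ‖(1 : ℂ) + k‖ = 1 + k := by
        rw [show (1 : ℂ) + k = ((1 + k : ℝ) : ℂ) by push_cast; rfl, norm_real, Real.norm_eq_abs,
          abs_of_nonneg]
        positivity
      refine mul_le_mul ?_ ?_ (norm_nonneg _) (by positivity)
      · rw [norm_div, norm_mul, n1]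
        gcongr
        · exact nk B
        · exact nk C
      · have n2 : ‖(1 / 2 + 2 * N + k : ℂ)‖ = 1 / 2 + 2 * N + k := by
          rw [show (1 / 2 + 2 * N + k : ℂ) = ((1 / 2 + 2 * N + k : ℝ) : ℂ) by push_cast; rfl,
            norm_real, Real.norm_eq_abs, abs_of_nonneg]
          positivity
        have low : ∀ c : ℂ, ‖c‖ ≤ ‖b‖ → 1 + 2 * N - L + k ≤ ‖1 + c + 2 * N + k‖ := by
          intro c hc
          have h1 := norm_sub_norm_le (1 + 2 * N + k : ℂ) (-c)
          have h2 : ‖(1 + 2 * N + k : ℂ)‖ = 1 + 2 * N + k := by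
            rw [show (1 + 2 * N + k : ℂ) = ((1 + 2 * N + k : ℝ) : ℂ) by push_cast; rfl,
              norm_real, Real.norm_eq_abs, abs_of_nonneg]
            positivity
          rw [h2, norm_neg, sub_neg_eq_add] at h1
          rw [show 1 + c + 2 * (N : ℂ) + k = 1 + 2 * N + k + c by ring]
          linarith
        have l1 := low (-b) (by simp)
        have l2 := low b le_rfl
        rw [← sub_eq_add_neg] at l1
        rw [norm_div, norm_mul, n2]
        set q : ℝ := 1 + 2 * N - L + k with hq
        have hq0 : 1 + M + k ≤ q := by rw [hq]; linarith
        have hq1 : 0 < q := by linarith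
        have e1 : (1 / 2 + 2 * N + k : ℝ) = q + (L - 1 / 2) := by rw [hq]; ring
        have e2 : M + L + 1 / 2 + k = (1 + M + k) + (L - 1 / 2) := by ring
        calc _ ≤ (1 / 2 + 2 * N + k) / (q * q) := by gcongr
          _ = 1 / q + (L - 1 / 2) * (1 / q * (1 / q)) := by rw [e1]; field_simp
          _ ≤ 1 / (1 + M + k) + (L - 1 / 2) * (1 / (1 + M + k) * (1 / (1 + M + k))) := by
            have : 1 / q ≤ 1 / (1 + M + k) := by gcongr
            have h3 : 0 ≤ L - 1 / 2 := by linarith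
            gcongr
          _ = _ := by rw [e2]; field_simp
  have H := tendsto_tsum_of_dominated_convergence (f := fun N k => uu b B C N k)
    (g := fun k => if k = 0 then (1:ℂ) else 0) (𝓕 := atTop) (bound := fun k => ‖v k‖) hv.norm
    (fun k => uu_tendsto hm hp k) (by
      obtain ⟨N0, hN0⟩ := exists_nat_ge (M + L)
      filter_upwards [eventually_ge_atTop N0] with N hN k
      apply hbd
      have h1 : (N0 : ℝ) ≤ N := by exact_mod_cast hN
      have h2 : (0 : ℝ) ≤ N := by positivity
      linarith)
  simpa using H

end

section
variable {b B C : ℂ}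

lemma rec_step (hm : ∀ j : ℕ, 1 - b + j ≠ 0) (hp : ∀ j : ℕ, 1 + b + j ≠ 0)
    (hBC : B + C = 1) (N : ℕ) (ρ x0 x1 x2 : ℂ)
    (h : ∀ k : ℕ, uu b B C N k - ρ * uu b B C (N + 1) k =
      ((k + 1 : ℕ) : ℂ) * (x0 + x1 * (k + 1 : ℕ) + x2 * ((k + 1 : ℕ) : ℂ) ^ 2) /
        ((1 - b + 2 * N + (k + 1 : ℕ)) * (1 + b + 2 * N + (k + 1 : ℕ))) * uu b B C N (k + 1)
      - (k : ℂ) * (x0 + x1 * k + x2 * (k : ℂ) ^ 2) /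
        ((1 - b + 2 * N + k) * (1 + b + 2 * N + k)) * uu b B C N k) :
    ∑' k, uu b B C N k = ρ * ∑' k, uu b B C (N + 1) k := by
  set G : ℕ → ℂ := fun k => (k : ℂ) * (x0 + x1 * k + x2 * (k : ℂ) ^ 2) /
        ((1 - b + 2 * N + k) * (1 + b + 2 * N + k)) * uu b B C N k with hGdef
  have hG : Tendsto G atTop (𝓝 0) := by
    have t1 := inv_tendsto (1 - b + 2 * N)
    have t2 := inv_tendsto (1 + b + 2 * N)
    have s1 := (t1.const_mul (1 - b + 2 * N)).const_sub 1
    have s2 := (t2.const_mul (1 + b + 2 * N)).const_sub 1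
    have T := (((t1.mul t2).const_mul x0).add ((s1.mul t2).const_mul x1)).add
      ((s1.mul s2).const_mul x2)
    have hku : Tendsto (fun k : ℕ => (k : ℂ) * uu b B C N k) atTop (𝓝 0) := by
      rw [← tendsto_add_atTop_iff_nat 1]
      have o1 : (fun k : ℕ => ((k + 1 : ℕ) : ℂ)) =O[atTop] (fun k : ℕ => (k : ℝ)) := by
        refine IsBigO.of_bound 2 ?_
        filter_upwards [eventually_ge_atTop 1] with k hk
        have hk' : (1 : ℝ) ≤ k := by exact_mod_cast hk
        rw [Complex.norm_natCast]
        simp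
        linarith
      have o2 := o1.mul (uu_isBigO (b := b) (B := B) (C := C) hm hp hBC N)
      refine (o2.trans ?_).trans_tendsto
        ((tendsto_rpow_neg_atTop (y := 1 / 2) (by norm_num)).comp
          (tendsto_natCast_atTop_atTop (R := ℝ)))
      refine IsBigO.of_bound 1 ?_
      filter_upwards [eventually_ge_atTop 1] with k hk
      have hk' : (1 : ℝ) ≤ k := by exact_mod_cast hk
      have hk0 : (0 : ℝ) < k := by linarith
      rw [one_mul]
      have : (k : ℝ) * (k : ℝ) ^ (-(3 / 2) - 2 * N : ℝ) = (k : ℝ) ^ (-(1 / 2) - 2 * N : ℝ) := by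
        rw [← Real.rpow_one_add' hk0.le]
        · congr 1; ring
        · have : (0 : ℝ) ≤ N := by positivity
          intro hh; linarith
      rw [this, Function.comp_apply, Real.norm_of_nonneg (by positivity),
        Real.norm_of_nonneg (by positivity)]
      apply Real.rpow_le_rpow_of_exponent_le hk'
      have : (0 : ℝ) ≤ N := by positivity
      linarith
    have := T.mul hku
    rw [mul_zero] at this
    refine this.congr fun k => ?_
    have a1 := sh_ne hm N k
    have a2 := sh_ne hp N k
    simp only [hGdef]
    field_simp
    ring
  have hs := (uu_summable (B := B) (C := C) hm hp hBC N).hasSum.sub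
    ((uu_summable (B := B) (C := C) hm hp hBC (N + 1)).hasSum.mul_left ρ)
  have t := hs.tendsto_sum_nat
  have e : (fun n => ∑ k ∈ range n, (uu b B C N k - ρ * uu b B C (N + 1) k)) = G := by
    funext n
    rw [sum_congr rfl (fun k _ => h k), sum_range_sub G]
    simp [hGdef]
  rw [e] at t
  exact sub_eq_zero.1 (tendsto_nhds_unique t hG)

lemma step_aux (hm : ∀ j : ℕ, 1 - b + j ≠ 0) (hp : ∀ j : ℕ, 1 + b + j ≠ 0)
    (N : ℕ) (ρ x0 x1 x2 M : ℂ) (k : ℕ)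
    (hρ : ρ * ((1 - b + 2 * N) * (1 - b + 2 * N + 1) * ((1 + b + 2 * N) * (1 + b + 2 * N + 1)))
      = M * ((1 / 2 + 2 * N) * (1 / 2 + 2 * N + 1)))
    (hid : (1 - b + 2 * N + k) * (1 + b + 2 * N + k) *
        ((1 - b + 2 * N + 1 + k) * (1 + b + 2 * N + 1 + k))
        - M * (1 / 2 + 2 * N + k) * (1 / 2 + 2 * N + 1 + k) =
        (x0 + x1 * (k + 1) + x2 * (k + 1) ^ 2) * (1 / 2 + 2 * N + k) * (B + k) * (C + k)
        - k * (x0 + x1 * k + x2 * k ^ 2) * ((1 - b + 2 * N + 1 + k) * (1 + b + 2 * N + 1 + k))) :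
    uu b B C N k - ρ * uu b B C (N + 1) k =
      ((k + 1 : ℕ) : ℂ) * (x0 + x1 * (k + 1 : ℕ) + x2 * ((k + 1 : ℕ) : ℂ) ^ 2) /
        ((1 - b + 2 * N + (k + 1 : ℕ)) * (1 + b + 2 * N + (k + 1 : ℕ))) * uu b B C N (k + 1)
      - (k : ℂ) * (x0 + x1 * k + x2 * (k : ℂ) ^ 2) /
        ((1 - b + 2 * N + k) * (1 + b + 2 * N + k)) * uu b B C N k := by
  rw [uu_succ, uu_shift hm hp]
  have a1 := sh_ne hm N k
  have a2 := sh_ne hm N (1 + k)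
  have b1 := sh_ne hp N k
  have b2 := sh_ne hp N (1 + k)
  have c3 := half_ne N 1
  have c4 := half_ne N 0
  have c5 := one_add_nat_ne k
  push_cast at a2 b2 c3 c4 ⊢
  rw [← add_assoc] at a2 b2
  rw [add_zero] at c4
  rw [show (1 - b + 2 * N + (k + 1) : ℂ) = 1 - b + 2 * N + 1 + k by ring,
    show (1 + b + 2 * N + (k + 1) : ℂ) = 1 + b + 2 * N + 1 + k by ring,
    show (k + 1 : ℂ) = 1 + k by ring]
  rw [show (k + 1 : ℂ) = 1 + k by ring] at hid
  generalize uu b B C N k = U at *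
  generalize (1 : ℂ) / 2 + 2 * N = y at *
  generalize (1 : ℂ) - b + 2 * N = e at *
  generalize (1 : ℂ) + b + 2 * N = f at *
  generalize (k : ℂ) = z at *
  have hr : ρ * (U * ((y + z) * (y + 1 + z) / (y * (y + 1)) *
      (e * (e + 1) * (f * (f + 1)) / ((e + z) * (e + 1 + z) * ((f + z) * (f + 1 + z)))))) =
      U * (M * ((y + z) * (y + 1 + z)) / ((e + z) * (e + 1 + z) * ((f + z) * (f + 1 + z)))) := by
    field_simp
    linear_combination U * (y + z) * (y + 1 + z) * hρ
  rw [hr]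
  clear hr hρ
  generalize e + 1 + z = E1 at *
  generalize f + 1 + z = F1 at *
  generalize e + z = E0 at *
  generalize f + z = F0 at *
  generalize x0 + x1 * z + x2 * z ^ 2 = X0 at *
  generalize x0 + x1 * (1 + z) + x2 * (1 + z) ^ 2 = X1 at *
  have l : U - U * (M * ((y + z) * (y + 1 + z)) / (E0 * E1 * (F0 * F1))) =
      U * (E0 * F0 * (E1 * F1) - M * (y + z) * (y + 1 + z)) / (E0 * E1 * (F0 * F1)) := by
    field_simp
  rw [l, hid]
  field_simp

lemma dixon_step (hm : ∀ j : ℕ, 1 - b + j ≠ 0) (hp : ∀ j : ℕ, 1 + b + j ≠ 0)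
    (N : ℕ) :
    ∑' k, uu b (1 / 2 + b) (1 / 2 - b) N k =
    ((3 / 4 + N) / (1 / 2 - b / 2 + N) * ((3 / 4 + N) / (1 - b / 2 + N)) *
      ((3 / 4 - b + N) / (1 / 2 + b / 2 + N)) * ((3 / 4 + b + N) / (1 + b / 2 + N))) *
    ∑' k, uu b (1 / 2 + b) (1 / 2 - b) (N + 1) k := by
  have c3 := half_ne N 1
  have c4 := half_ne N 0
  have a3 := sh_ne hm N 1
  have a4 := sh_ne hm N 0
  have b3 := sh_ne hp N 1
  have b4 := sh_ne hp N 0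
  push_cast at a3 b3 a4 b4 c3 c4
  rw [add_zero] at a4 b4 c4
  set y : ℂ := 1 / 2 + 2 * N with hy
  refine rec_step hm hp (by ring) N _
    ((1 / 4 - b ^ 2 - 3 / 4 * y - b ^ 2 * y - 3 * y ^ 2 - 2 * y ^ 3) / (y * (y + 1)))
    ((-1 - 4 * y - 3 * y ^ 2) / (y * (y + 1))) ((-1 - y) / (y * (y + 1))) fun k => ?_
  refine step_aux hm hp N _ _ _ _
    ((y + 1) ^ 2 * ((y + 1) ^ 2 - 4 * b ^ 2) / (y * (y + 1))) k ?_ ?_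
  · rw [← hy, div_mul_cancel₀ _ (mul_ne_zero c4 c3)]
    rw [show (1 / 2 - b / 2 + N : ℂ) = (1 - b + 2 * N) / 2 by ring,
      show (1 - b / 2 + N : ℂ) = (1 - b + 2 * N + 1) / 2 by ring,
      show (1 / 2 + b / 2 + N : ℂ) = (1 + b + 2 * N) / 2 by ring,
      show (1 + b / 2 + N : ℂ) = (1 + b + 2 * N + 1) / 2 by ring]
    generalize (1 : ℂ) - b + 2 * N = e at *
    generalize (1 : ℂ) + b + 2 * N = f at *
    field_simp
    rw [hy]
    ring
  · rw [← hy, show (1 - b + 2 * N : ℂ) = y + 1 / 2 - b by rw [hy]; ring,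
      show (1 + b + 2 * N : ℂ) = y + 1 / 2 + b by rw [hy]; ring]
    clear_value y
    generalize (k : ℂ) = z
    field_simp
    ring

lemma whipple_step (hm : ∀ j : ℕ, 1 - b + j ≠ 0) (hp : ∀ j : ℕ, 1 + b + j ≠ 0)
    (N : ℕ) :
    ∑' k, uu b (1 / 4) (3 / 4) N k =
    ((5 / 8 - b / 2 + N) / (1 / 2 - b / 2 + N) * ((7 / 8 - b / 2 + N) / (1 - b / 2 + N)) *
      ((5 / 8 + b / 2 + N) / (1 / 2 + b / 2 + N)) * ((7 / 8 + b / 2 + N) / (1 + b / 2 + N))) *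
    ∑' k, uu b (1 / 4) (3 / 4) (N + 1) k := by
  have c3 := half_ne N 1
  have c4 := half_ne N 0
  have a3 := sh_ne hm N 1
  have a4 := sh_ne hm N 0
  have b3 := sh_ne hp N 1
  have b4 := sh_ne hp N 0
  push_cast at a3 b3 a4 b4 c3 c4
  rw [add_zero] at a4 b4 c4
  set y : ℂ := 1 / 2 + 2 * N with hy
  refine rec_step hm hp (by ring) N _
    ((1 / 4 - b ^ 2 - 11 / 16 * y - 2 * b ^ 2 * y - 3 * y ^ 2 - 2 * y ^ 3) / (y * (y + 1)))
    ((-15 / 16 - b ^ 2 - 4 * y - 3 * y ^ 2) / (y * (y + 1)))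
    ((-1 - y) / (y * (y + 1))) fun k => ?_
  refine step_aux hm hp N _ _ _ _
    (((y + 3 / 4) ^ 2 - b ^ 2) * ((y + 5 / 4) ^ 2 - b ^ 2) / (y * (y + 1))) k ?_ ?_
  · rw [← hy, div_mul_cancel₀ _ (mul_ne_zero c4 c3)]
    rw [show (1 / 2 - b / 2 + N : ℂ) = (1 - b + 2 * N) / 2 by ring,
      show (1 - b / 2 + N : ℂ) = (1 - b + 2 * N + 1) / 2 by ring,
      show (1 / 2 + b / 2 + N : ℂ) = (1 + b + 2 * N) / 2 by ring,
      show (1 + b / 2 + N : ℂ) = (1 + b + 2 * N + 1) / 2 by ring]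
    generalize (1 : ℂ) - b + 2 * N = e at *
    generalize (1 : ℂ) + b + 2 * N = f at *
    field_simp
    rw [hy]
    ring
  · rw [← hy, show (1 - b + 2 * N : ℂ) = y + 1 / 2 - b by rw [hy]; ring,
      show (1 + b + 2 * N : ℂ) = y + 1 / 2 + b by rw [hy]; ring]
    clear_value y
    generalize (k : ℂ) = z
    field_simp
    ring

lemma iterate_limit (hm : ∀ j : ℕ, 1 - b + j ≠ 0) (hp : ∀ j : ℕ, 1 + b + j ≠ 0)
    (B C x₁ x₂ x₃ x₄ : ℂ) 
    (hx₁ : ∀ j : ℕ, x₁ + j ≠ 0) (hx₂ : ∀ j : ℕ, x₂ + j ≠ 0)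
    (hx₃ : ∀ j : ℕ, x₃ + j ≠ 0) (hx₄ : ∀ j : ℕ, x₄ + j ≠ 0)
    (hx : x₁ + x₂ + x₃ + x₄ = 3)
    (h : ∀ N : ℕ, ∑' k, uu b B C N k =
      ((x₁ + N) / (1 / 2 - b / 2 + N) * ((x₂ + N) / (1 - b / 2 + N)) *
      ((x₃ + N) / (1 / 2 + b / 2 + N)) * ((x₄ + N) / (1 + b / 2 + N))) *
      ∑' k, uu b B C (N + 1) k) :
    ∑' k, uu b B C 0 k = Real.pi * Gamma (1 - b) * Gamma (1 + b) /
      (Gamma x₁ * Gamma x₂ * Gamma x₃ * Gamma x₄) := by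
  have y1 : ∀ j : ℕ, 1 / 2 - b / 2 + j ≠ 0 := fun j hj => by
    have := sh_ne hm j 0
    apply this; push_cast; linear_combination 2 * hj
  have y2 : ∀ j : ℕ, 1 - b / 2 + j ≠ 0 := fun j hj => by
    have := sh_ne hm j 1
    apply this; push_cast; linear_combination 2 * hj
  have y3 : ∀ j : ℕ, 1 / 2 + b / 2 + j ≠ 0 := fun j hj => by
    have := sh_ne hp j 0
    apply this; push_cast; linear_combination 2 * hj
  have y4 : ∀ j : ℕ, 1 + b / 2 + j ≠ 0 := fun j hj => by
    have := sh_ne hp j 1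
    apply this; push_cast; linear_combination 2 * hj
  have key : ∀ n : ℕ, ∑' k, uu b B C 0 k =
      (pp x₁ n / pp (1 / 2 - b / 2) n * (pp x₂ n / pp (1 - b / 2) n) *
      (pp x₃ n / pp (1 / 2 + b / 2) n) * (pp x₄ n / pp (1 + b / 2) n)) * ∑' k, uu b B C n k := by
    intro n
    induction n with
    | zero => simp [pp_zero]
    | succ n ih =>
      rw [ih, h n]
      simp only [pp_succ, mul_div_mul_comm]
      ring
  have lim := (pp_ratio4 x₁ x₂ x₃ x₄ _ _ _ _ hx₁ hx₂ hx₃ hx₄ y1 y2 y3 y4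
    (by rw [hx]; ring)).mul (uu_tsum_tendsto (B := B) (C := C) hm hp)
  have e := tendsto_nhds_unique (lim.congr fun n => (key n).symm) tendsto_const_nhds
  rw [← e]
  have d1 := Complex.Gamma_mul_Gamma_add_half (1 / 2 - b / 2)
  have d2 := Complex.Gamma_mul_Gamma_add_half (1 / 2 + b / 2)
  rw [show 1 / 2 - b / 2 + 1 / 2 = 1 - b / 2 by ring, show 2 * (1 / 2 - b / 2) = 1 - b by ring,
    show 1 - (1 - b) = b by ring] at d1
  rw [show 1 / 2 + b / 2 + 1 / 2 = 1 + b / 2 by ring, show 2 * (1 / 2 + b / 2) = 1 + b by ring,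
    show 1 - (1 + b) = -b by ring] at d2
  have d3 : (2:ℂ) ^ b * (2:ℂ) ^ (-b) = 1 := by
    rw [← cpow_add _ _ two_ne_zero, add_neg_cancel, cpow_zero]
  have d4 : ((√Real.pi : ℝ) : ℂ) * (√Real.pi : ℝ) = Real.pi := by
    rw [← ofReal_mul, Real.mul_self_sqrt Real.pi_pos.le]
  rw [mul_one, div_mul_div_comm, div_mul_div_comm, div_mul_div_comm]
  congr 1
  rw [d1, mul_assoc, d2]
  linear_combination Gamma (1 - b) * Gamma (1 + b) * (√Real.pi : ℝ) * (√Real.pi : ℝ) * d3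
    + Gamma (1 - b) * Gamma (1 + b) * d4

end

lemma pp_add (x : ℂ) (k m : ℕ) : pp x (k + m) = pp x k * pp (x + k) m := by
  induction m with
  | zero => simp [pp_zero]
  | succ m ih => rw [← add_assoc, pp_succ, ih, pp_succ]; push_cast; ring

lemma pp_succ_left (x : ℂ) (k : ℕ) : pp x (k + 1) = x * pp (x + 1) k := by
  rw [pp_shift, pp_succ]

lemma pp_double (x : ℂ) (k : ℕ) : pp x (2 * k) = 4 ^ k * pp (x / 2) k * pp ((x + 1) / 2) k := by
  induction k with
  | zero => simp [pp_zero]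
  | succ k ih =>
    rw [show 2 * (k + 1) = 2 * k + 1 + 1 by ring, pp_succ, pp_succ, ih, pp_succ, pp_succ]
    push_cast; ring

lemma pp_neg (k m : ℕ) : pp (-((k + m : ℕ) : ℂ)) k * m.factorial =
    (-1) ^ k * (k + m).factorial := by
  induction k with
  | zero => simp [pp_zero]
  | succ k ih =>
    rw [pp_succ_left, show (-((k + 1 + m : ℕ) : ℂ) + 1) = -((k + m : ℕ) : ℂ) by push_cast; ring,
      mul_assoc, ih, show k + 1 + m = (k + m) + 1 by ring, Nat.factorial_succ]
    push_cast; ring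

section
variable {b : ℂ}

lemma saal (hm : ∀ j : ℕ, 1 - b + j ≠ 0) (hp : ∀ j : ℕ, 1 + b + j ≠ 0)
    (n : ℕ) :
    ∑ k ∈ range (n + 1), pp (-(n : ℂ)) k * pp (n + 1 / 2) k * pp (1 / 2) k /
      (pp 1 k * pp (1 - b) k * pp (1 + b) k) =
    pp (1 / 2 + b) n * pp (1 / 2 - b) n / (pp (1 - b) n * pp (1 + b) n) := by
  induction n with
  | zero => simp [pp_zero]
  | succ n ih =>
    have hn1 : (n : ℂ) + 1 ≠ 0 := by rw [add_comm]; exact one_add_nat_ne n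
    have hn2 : (n : ℂ) + 1 / 2 ≠ 0 := by have := half_ne 0 n; rw [add_comm]; simpa using this
    have e1 := hm n
    have e2 := hp n
    let v : ℕ → ℂ := fun k => pp (-((n + 1 : ℕ) : ℂ)) k * pp (n + 1 / 2) k * pp (1 / 2) k /
      (pp 1 k * pp (1 - b) k * pp (1 + b) k)
    have s1 : ∀ k, pp (-(n : ℂ)) k * pp (n + 1 / 2) k * pp (1 / 2) k /
      (pp 1 k * pp (1 - b) k * pp (1 + b) k) = v k * (n + 1 - k) / (n + 1) := by
      intro k
      have := pp_shift (-((n + 1 : ℕ) : ℂ)) k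
      rw [show -((n + 1 : ℕ) : ℂ) + 1 = -(n : ℂ) by push_cast; ring] at this
      have h2 : pp (-(n : ℂ)) k = pp (-((n + 1 : ℕ) : ℂ)) k * (n + 1 - k) / (n + 1) := by
        rw [eq_div_iff hn1]
        push_cast at this ⊢
        linear_combination -this
      rw [h2]; simp only [v]; ring
    have s2 : ∀ k, pp (-((n + 1 : ℕ) : ℂ)) k * pp ((n + 1 : ℕ) + 1 / 2) k * pp (1 / 2) k /
      (pp 1 k * pp (1 - b) k * pp (1 + b) k) = v k * (n + 1 / 2 + k) / (n + 1 / 2) := by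
      intro k
      have := pp_shift (n + 1 / 2 : ℂ) k
      rw [show (n + 1 / 2 : ℂ) + 1 = (n + 1 : ℕ) + 1 / 2 by push_cast; ring] at this
      have h2 : pp ((n + 1 : ℕ) + 1 / 2) k = pp (n + 1 / 2) k * (n + 1 / 2 + k) / (n + 1 / 2) := by
        rw [eq_div_iff hn2]
        linear_combination this
      rw [h2]; simp only [v]; ring
    have vs : ∀ k : ℕ, v (k + 1) = v k * ((-((n + 1 : ℕ) : ℂ) + k) * (n + 1 / 2 + k) * (1 / 2 + k)
        / ((1 + k) * (1 - b + k) * (1 + b + k))) := by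
      intro k
      simp only [v, pp_succ]
      rw [div_mul_div_comm]
      congr 1 <;> ring
    have v0 : v (n + 2) = 0 := by
      have : pp (-((n + 1 : ℕ) : ℂ)) (n + 2) = 0 := by
        rw [pp_succ]; push_cast; ring
      simp only [v, this, zero_mul, zero_div]
    set τ : ℂ := ((1 / 2 + b + n) * (1 / 2 - b + n)) / ((1 - b + n) * (1 + b + n)) with hτ
    have tel : ∀ M : ℕ, ∑ k ∈ range M, (v k * (n + 1 / 2 + k) / (n + 1 / 2)
        - τ * (v k * (n + 1 - k) / (n + 1))) =
        -(2 * n + 3 / 2) * (M * (M ^ 2 - b ^ 2)) /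
          ((n + 1 / 2) * ((1 - b + n) * (1 + b + n)) * (n + 1)) * v M := by
      intro M
      induction M with
      | zero => simp
      | succ M ihM =>
        rw [sum_range_succ, ihM, vs, hτ]
        have c1 := hm M
        have c2 := hp M
        have c3 := one_add_nat_ne M
        push_cast
        rw [show ((M : ℂ) + 1) * (((M : ℂ) + 1) ^ 2 - b ^ 2) =
          (1 + M) * (1 - b + M) * (1 + b + M) by ring]
        generalize v M = V
        generalize (M : ℂ) = z at *
        generalize (n : ℂ) = x at *
        have c4 : -(2 * x + 3 / 2) * ((1 + z) * (1 - b + z) * (1 + b + z)) /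
          ((x + 1 / 2) * ((1 - b + x) * (1 + b + x)) * (x + 1)) *
          (V * ((-(x + 1) + z) * (x + 1 / 2 + z) * (1 / 2 + z) /
            ((1 + z) * (1 - b + z) * (1 + b + z)))) =
          -(2 * x + 3 / 2) / ((x + 1 / 2) * ((1 - b + x) * (1 + b + x)) * (x + 1)) *
          (V * ((-(x + 1) + z) * (x + 1 / 2 + z) * (1 / 2 + z))) := by
          field_simp
        rw [c4]
        have hn2' : 2 * x + 1 ≠ 0 := by intro h; apply hn2; linear_combination h / 2
        rw [show x + 1 / 2 = (2 * x + 1) / 2 by ring]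
        field_simp
        ring
    have T := tel (n + 2)
    rw [v0, mul_zero, sum_sub_distrib, ← mul_sum] at T
    have vl : ∑ k ∈ range (n + 2), v k * (n + 1 - k) / (n + 1) =
        pp (1 / 2 + b) n * pp (1 / 2 - b) n / (pp (1 - b) n * pp (1 + b) n) := by
      rw [sum_range_succ, ← ih]
      push_cast
      rw [sub_self, mul_zero, zero_div, add_zero]
      exact sum_congr rfl fun k _ => (s1 k).symm
    rw [vl] at T
    rw [sum_congr rfl fun k _ => s2 k]
    rw [sub_eq_zero.1 T, hτ, pp_succ, pp_succ, pp_succ, pp_succ, div_mul_div_comm]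
    congr 1 <;> ring

lemma coeff_id (hm : ∀ j : ℕ, 1 - b + j ≠ 0) (hp : ∀ j : ℕ, 1 + b + j ≠ 0)
    (n : ℕ) : uu b (1 / 2 + b) (1 / 2 - b) 0 n =
    ∑ p ∈ HasAntidiagonal.antidiagonal n, uu b (1 / 4) (3 / 4) 0 p.1 * (-4) ^ p.1 *
      (pp (1 / 2 + 2 * p.1) p.2 / p.2.factorial) := by
  have h := saal hm hp n
  have e : uu b (1 / 2 + b) (1 / 2 - b) 0 n = pp (1 / 2) n / n.factorial *
      (pp (1 / 2 + b) n * pp (1 / 2 - b) n / (pp (1 - b) n * pp (1 + b) n)) := by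
    simp only [uu, pp_one]
    simp
    rw [div_mul_div_comm]
    congr 1 <;> ring
  rw [e, ← h, ← Finset.Nat.sum_antidiagonal_eq_sum_range_succ_mk
    (f := fun p => pp (-(n : ℂ)) p.1 * pp (n + 1 / 2) p.1 * pp (1 / 2) p.1 /
      (pp 1 p.1 * pp (1 - b) p.1 * pp (1 + b) p.1)), mul_sum]
  refine sum_congr rfl ?_
  rintro ⟨k, m⟩ hkm
  rw [HasAntidiagonal.mem_antidiagonal] at hkm
  simp only at hkm ⊢
  subst hkm
  have f1 := pp_neg k m
  have f2 : pp (1 / 2) (k + m) * pp ((k + m : ℕ) + 1 / 2) k = pp (1 / 2) (2 * k) *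
      pp (1 / 2 + 2 * k) m := by
    have g1 := pp_add (1 / 2) (k + m) k
    have g2 := pp_add (1 / 2) (2 * k) m
    rw [show k + m + k = 2 * k + m by ring] at g1
    rw [add_comm ((k + m : ℕ) : ℂ), ← g1, g2]
    push_cast; rfl
  have f3 := pp_double (1 / 2) k
  rw [show (1 / 2 / 2 : ℂ) = 1 / 4 by norm_num, show ((1 / 2 + 1) / 2 : ℂ) = 3 / 4 by norm_num] at f3
  rw [f3] at f2
  have n1 : ((k + m).factorial : ℂ) ≠ 0 := by exact_mod_cast (k + m).factorial_ne_zero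
  have n2 : (m.factorial : ℂ) ≠ 0 := by exact_mod_cast m.factorial_ne_zero
  have n3 := pp_ne_zero hm k
  have n4 := pp_ne_zero hp k
  have n5 := pp_ne_zero one_add_nat_ne k
  have f4 : pp (-((k + m : ℕ) : ℂ)) k = (-1) ^ k * (k + m).factorial / m.factorial := by
    rw [eq_div_iff n2, f1]
  rw [f4]
  simp only [uu]
  simp only [Nat.cast_zero, mul_zero, add_zero]
  rw [show (-4 : ℂ) ^ k = (-1) ^ k * 4 ^ k by rw [← mul_pow]; norm_num]
  generalize pp ((k + m : ℕ) + 1 / 2) k = A1 at *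
  generalize pp (1 / 2) (k + m) = A2 at *
  generalize pp (1 / 2 + 2 * (k : ℂ)) m = A3 at *
  field_simp
  linear_combination (pp (1 / 2) k) * f2

end

lemma binom_hasSum (α z : ℂ) (hz : ‖z‖ < 1) :
    HasSum (fun m : ℕ => pp α m / m.factorial * (-z) ^ m) ((1 + z) ^ (-α)) := by
  have h := Complex.one_div_one_sub_cpow_hasFPowerSeriesOnBall_zero α
  have h2 := h.hasSum (y := -z) (by
    rw [Metric.mem_eball, edist_zero_right, enorm_neg, ← ofReal_norm]
    exact ENNReal.ofReal_lt_one.2 hz)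
  rw [zero_add, sub_neg_eq_add, one_div, ← cpow_neg] at h2
  convert! h2 using 2 with m
  simp only [FormalMultilinearSeries.ofScalars_apply_eq, smul_eq_mul]
  congr 1
  rw [← Ring.multichoose_eq, div_eq_iff (by exact_mod_cast m.factorial_ne_zero)]
  have := Ring.factorial_nsmul_multichoose_eq_ascPochhammer α m
  rw [Polynomial.ascPochhammer_smeval_eq_eval] at this
  rw [pp, ← this, nsmul_eq_mul, mul_comm]

lemma pp_half_bound (k m : ℕ) : ‖pp (1 / 2 + 2 * k) m / m.factorial‖ ≤ 4 ^ k * 2 ^ m := by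
  have h1 : ‖pp (1 / 2 + 2 * k) m‖ * (2 * k).factorial ≤ (2 * k + m).factorial := by
    induction m with
    | zero => simp [pp_zero]
    | succ m ih =>
      rw [pp_succ, norm_mul, ← add_assoc, Nat.factorial_succ]
      have : ‖(1 / 2 + 2 * k + m : ℂ)‖ ≤ 2 * k + m + 1 := by
        rw [show (1 / 2 + 2 * k + m : ℂ) = ((1 / 2 + 2 * k + m : ℝ) : ℂ) by push_cast; rfl,
            norm_real, Real.norm_eq_abs, abs_of_nonneg (by positivity)]
        linarith
      push_cast
      calc _ = ‖(1 / 2 + 2 * k + m : ℂ)‖ * (‖pp (1 / 2 + 2 * k) m‖ * (2 * k).factorial) := by ring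
        _ ≤ _ := by gcongr
  have h2 : (2 * k + m).factorial ≤ 2 ^ (2 * k + m) * ((2 * k).factorial * m.factorial) := by
    rw [← Nat.add_choose_mul_factorial_mul_factorial (2 * k) m, mul_assoc]
    gcongr
    exact Nat.choose_le_two_pow _ _
  have h3 : ((2 * k + m).factorial : ℝ) ≤ 2 ^ (2 * k + m) * ((2 * k).factorial * m.factorial) := by
    exact_mod_cast h2
  rw [norm_div, Complex.norm_natCast, div_le_iff₀ (by positivity)]
  have h4 : (0 : ℝ) < (2 * k).factorial := by positivity
  rw [pow_add, pow_mul] at h3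
  norm_num at h3
  have := h1.trans h3
  nlinarith

section
variable {b : ℂ}

lemma small_eq (hm : ∀ j : ℕ, 1 - b + j ≠ 0) (hp : ∀ j : ℕ, 1 + b + j ≠ 0)
    (z : ℂ) (hz : ‖z‖ < 1 / 32) :
    ∑' n, uu b (1 / 2 + b) (1 / 2 - b) 0 n * (-z) ^ n =
    (1 + z) ^ (-(1 / 2) : ℂ) * ∑' k, uu b (1 / 4) (3 / 4) 0 k * (4 * z / (1 + z) ^ 2) ^ k := by
  let f : ℕ × ℕ → ℂ := fun p => uu b (1 / 4) (3 / 4) 0 p.1 * (4 * z) ^ p.1 *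
    (pp (1 / 2 + 2 * p.1) p.2 / p.2.factorial * (-z) ^ p.2)
  have hW := uu_summable (B := 1 / 4) (C := 3 / 4) hm hp (by norm_num) 0
  obtain ⟨K, hK⟩ : ∃ K : ℝ, ∀ k, ‖uu b (1 / 4) (3 / 4) 0 k‖ ≤ K := by
    refine ⟨∑' k, ‖uu b (1 / 4) (3 / 4) 0 k‖, fun k => ?_⟩
    exact hW.norm.le_tsum k (fun _ _ => norm_nonneg _)
  have hf : Summable f := by
    have g1 : Summable (fun k : ℕ => K * (16 * ‖z‖) ^ k) :=
      (summable_geometric_of_lt_one (by positivity) (by linarith)).mul_left K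
    have g2 : Summable (fun m : ℕ => (2 * ‖z‖) ^ m) :=
      summable_geometric_of_lt_one (by positivity) (by linarith)
    have g3 := Summable.mul_of_nonneg g1 g2
      (fun k => mul_nonneg ((norm_nonneg _).trans (hK 0)) (by positivity))
      (fun k => by positivity)
    refine Summable.of_norm_bounded g3 ?_
    rintro ⟨k, m⟩
    simp only [f, norm_mul, norm_pow, norm_neg]
    rw [show ‖(4:ℂ)‖ = 4 by simp]
    have hh := pp_half_bound k m
    calc _ ≤ K * (4 * ‖z‖) ^ k * ((4 ^ k * 2 ^ m) * ‖z‖ ^ m) := by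
          gcongr
          · exact mul_nonneg ((norm_nonneg _).trans (hK 0)) (by positivity)
          · exact hK k
      _ = _ := by
          rw [show (16:ℝ) * ‖z‖ = 4 * (4 * ‖z‖) by ring, mul_pow 4 (4 * ‖z‖), mul_pow 2 ‖z‖]
          ring
  have hz1 : ‖z‖ < 1 := by linarith
  have hz0 : 1 + z ≠ 0 := by
    intro h
    have : z = -1 := by linear_combination h
    rw [this] at hz1; simp at hz1
  have s1 : ∑' p, f p = (1 + z) ^ (-(1 / 2) : ℂ) *
      ∑' k, uu b (1 / 4) (3 / 4) 0 k * (4 * z / (1 + z) ^ 2) ^ k := by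
    rw [hf.tsum_prod, ← tsum_mul_left]
    congr 1
    funext k
    simp only [f]
    rw [tsum_mul_left, (binom_hasSum (1 / 2 + 2 * k) z hz1).tsum_eq, neg_add, cpow_add _ _ hz0,
      cpow_neg _ (2 * (k : ℂ))]
    have : (1 + z) ^ (2 * (k : ℂ)) = ((1 + z) ^ 2) ^ k := by
      rw [show 2 * (k : ℂ) = ((2 * k : ℕ) : ℂ) by push_cast; rfl, cpow_natCast, pow_mul]
    rw [this, div_pow]
    ring
  have s2 : ∑' p, f p = ∑' n, uu b (1 / 2 + b) (1 / 2 - b) 0 n * (-z) ^ n := by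
    rw [← Finset.HasAntidiagonal.sigmaAntidiagonalEquivProd.tsum_eq f]
    have hf' : Summable (fun c => f (Finset.HasAntidiagonal.sigmaAntidiagonalEquivProd c)) :=
      (Finset.HasAntidiagonal.sigmaAntidiagonalEquivProd (A := ℕ)).summable_iff.2 hf
    rw [hf'.tsum_sigma' (fun n => (hasSum_fintype _).summable)]
    congr 1
    funext n
    rw [tsum_fintype, coeff_id hm hp, sum_mul]
    simp only [Finset.HasAntidiagonal.sigmaAntidiagonalEquivProd_apply]
    rw [Finset.sum_coe_sort (HasAntidiagonal.antidiagonal n) (fun p => f p)]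
    refine sum_congr rfl ?_
    rintro ⟨k, m⟩ hkm
    rw [HasAntidiagonal.mem_antidiagonal] at hkm
    simp only at hkm
    subst hkm
    simp only [f]
    rw [show (4 : ℂ) * z = (-4) * (-z) by ring, mul_pow, pow_add]
    ring
  rw [← s2, s1]

end

lemma series_analytic (c : ℕ → ℂ) (hc : Summable c) (z : ℂ) (hz : ‖z‖ < 1) :
    AnalyticAt ℂ (fun w => ∑' n, c n * w ^ n) z := by
  have hd : DifferentiableOn ℂ (fun w => ∑' n, c n * w ^ n) (Metric.ball 0 1) := by
    refine Complex.differentiableOn_tsum_of_summable_norm hc.norm (fun n => ?_)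
      Metric.isOpen_ball ?_
    · fun_prop
    · intro n w hw
      rw [norm_mul, norm_pow]
      have : ‖w‖ < 1 := by simpa using hw
      exact mul_le_of_le_one_right (norm_nonneg _) (pow_le_one₀ (norm_nonneg _) this.le)
  exact hd.analyticAt (Metric.isOpen_ball.mem_nhds (by simpa using hz))

lemma series_tendsto (c : ℕ → ℂ) (hc : Summable c) (g : ℝ → ℂ) (l : ℂ)
    (hg : Tendsto g (𝓝[<] 1) (𝓝 l)) (hb : ∀ᶠ r in 𝓝[<] (1:ℝ), ‖g r‖ ≤ 1) :
    Tendsto (fun r => ∑' n, c n * g r ^ n) (𝓝[<] 1) (𝓝 (∑' n, c n * l ^ n)) := by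
  refine tendsto_tsum_of_dominated_convergence hc.norm
    (fun n => (hg.pow n).const_mul (c n)) ?_
  filter_upwards [hb] with r hr n
  rw [norm_mul, norm_pow]
  exact mul_le_of_le_one_right (norm_nonneg _) (pow_le_one₀ (norm_nonneg _) hr)

lemma quad_bound (r : ℝ) (h0 : 0 ≤ r) (h1 : r < 1) :
    ‖(4 * r / (1 + r) ^ 2 : ℂ)‖ < 1 := by
  rw [show (4 * r / (1 + r) ^ 2 : ℂ) = ((4 * r / (1 + r) ^ 2 : ℝ) : ℂ) by push_cast; rfl,
    norm_real, Real.norm_of_nonneg (by positivity), div_lt_one (by positivity)]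
  nlinarith [sq_pos_of_pos (sub_pos.2 h1)]

section
variable {b : ℂ}

lemma real_eq (hm : ∀ j : ℕ, 1 - b + j ≠ 0) (hp : ∀ j : ℕ, 1 + b + j ≠ 0)
    (r : ℝ) (h0 : 0 ≤ r) (h1 : r < 1) :
    ∑' n, uu b (1 / 2 + b) (1 / 2 - b) 0 n * (-(r : ℂ)) ^ n =
    (1 + (r : ℂ)) ^ (-(1 / 2) : ℂ) *
      ∑' k, uu b (1 / 4) (3 / 4) 0 k * (4 * r / (1 + r) ^ 2 : ℂ) ^ k := by
  have hT := uu_summable (B := 1 / 2 + b) (C := 1 / 2 - b) hm hp (by ring) 0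
  have hW := uu_summable (B := 1 / 4) (C := 3 / 4) hm hp (by norm_num) 0
  let U : Set ℂ := (fun r : ℝ => (r : ℂ)) '' Set.Ico 0 1
  have hU : IsPreconnected U := isPreconnected_Ico.image _ continuous_ofReal.continuousOn
  have A1 : AnalyticOnNhd ℂ (fun z => ∑' n, uu b (1 / 2 + b) (1 / 2 - b) 0 n * (-z) ^ n) U := by
    rintro _ ⟨x, ⟨hx0, hx1⟩, rfl⟩
    refine (series_analytic _ hT (-(x : ℂ)) ?_).fun_comp (f := fun z : ℂ => -z)
      (analyticAt_id.neg)
    rw [norm_neg, norm_real, Real.norm_of_nonneg hx0]; exact hx1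
  have A2 : AnalyticOnNhd ℂ (fun z => (1 + z) ^ (-(1 / 2) : ℂ) *
      ∑' k, uu b (1 / 4) (3 / 4) 0 k * (4 * z / (1 + z) ^ 2) ^ k) U := by
    rintro _ ⟨x, ⟨hx0, hx1⟩, rfl⟩
    have hne : (1 : ℂ) + x ≠ 0 := by
      have : (1 + x : ℝ) ≠ 0 := by positivity
      exact_mod_cast this
    have a1 : AnalyticAt ℂ (fun z : ℂ => 1 + z) (x : ℂ) := analyticAt_const.add analyticAt_id
    refine AnalyticAt.mul ?_ ?_
    · refine a1.cpow analyticAt_const ?_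
      left; simp; linarith
    · refine (series_analytic _ hW _ (quad_bound x hx0 hx1)).fun_comp
        (f := fun z : ℂ => 4 * z / (1 + z) ^ 2) ?_
      exact (analyticAt_const.mul analyticAt_id).div (a1.pow 2) (pow_ne_zero 2 hne)
  have h0U : (0 : ℂ) ∈ U := ⟨0, ⟨le_rfl, one_pos⟩, by simp⟩
  have E := A1.eqOn_of_preconnected_of_eventuallyEq A2 hU h0U (by
    filter_upwards [Metric.ball_mem_nhds (0:ℂ) (show (0:ℝ) < 1 / 32 by norm_num)] with z hz
    exact small_eq hm hp z (by simpa using hz))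
  exact E ⟨r, ⟨h0, h1⟩, rfl⟩

lemma minus_one (hm : ∀ j : ℕ, 1 - b + j ≠ 0) (hp : ∀ j : ℕ, 1 + b + j ≠ 0)
    : ∑' n, uu b (1 / 2 + b) (1 / 2 - b) 0 n * (-1) ^ n =
    (2 : ℂ) ^ (-(1 / 2) : ℂ) * ∑' k, uu b (1 / 4) (3 / 4) 0 k := by
  have hT := uu_summable (B := 1 / 2 + b) (C := 1 / 2 - b) hm hp (by ring) 0
  have hW := uu_summable (B := 1 / 4) (C := 3 / 4) hm hp (by norm_num) 0
  have hev : ∀ᶠ r in 𝓝[<] (1:ℝ), 0 ≤ r ∧ r < 1 := by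
    filter_upwards [Ioo_mem_nhdsLT (show (0:ℝ) < 1 by norm_num)] with r hr
    exact ⟨hr.1.le, hr.2⟩
  have c0 : Tendsto (fun r : ℝ => (r : ℂ)) (𝓝[<] 1) (𝓝 1) := by
    have := (continuous_ofReal.tendsto 1).mono_left (nhdsWithin_le_nhds (s := Set.Iio (1:ℝ)))
    simpa using this
  have L := series_tendsto _ hT (fun r => -(r : ℂ)) (-1) c0.neg (by
    filter_upwards [hev] with r hr
    rw [norm_neg, norm_real, Real.norm_of_nonneg hr.1]; exact hr.2.le)
  have c1 : Tendsto (fun r : ℝ => (1 + r : ℂ)) (𝓝[<] 1) (𝓝 2) := by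
    have := c0.const_add 1
    rwa [one_add_one_eq_two] at this
  have R := series_tendsto _ hW (fun r => (4 * r / (1 + r) ^ 2 : ℂ)) 1 (by
    have := (c0.const_mul 4).div (c1.pow 2) (by norm_num)
    convert! this using 2
    norm_num) (by
    filter_upwards [hev] with r hr
    exact (quad_bound r hr.1 hr.2).le)
  have c2 : Tendsto (fun r : ℝ => (1 + r : ℂ) ^ (-(1 / 2) : ℂ)) (𝓝[<] 1)
      (𝓝 ((2 : ℂ) ^ (-(1 / 2) : ℂ))) := by
    refine Tendsto.comp (y := 𝓝 2) (g := fun z : ℂ => z ^ (-(1 / 2) : ℂ)) ?_ c1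
    exact (continuousAt_cpow_const (by left; simp)).tendsto
  have R' := c2.mul R
  have := tendsto_nhds_unique (L.congr' (by
    filter_upwards [hev] with r hr
    exact real_eq hm hp r hr.1 hr.2)) R'
  simpa using this

end

lemma coeff_even (a : ℂ) (k : ℕ) :
    hypCoeff ![1 / 4, 3 / 4, 1 / 4 + a, 3 / 4 + a, 1 / 4 - a, 3 / 4 - a]
        ![1, 1 / 2, 1 - a, 1 / 2 - a, 1 + a, 1 / 2 + a] k =
      uu (2 * a) (1 / 2 + 2 * a) (1 / 2 - 2 * a) 0 (2 * k) := by
  have e : hypCoeff ![1 / 4, 3 / 4, 1 / 4 + a, 3 / 4 + a, 1 / 4 - a, 3 / 4 - a]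
        ![1, 1 / 2, 1 - a, 1 / 2 - a, 1 + a, 1 / 2 + a] k =
      (pp (1 / 4) k * pp (3 / 4) k * pp (1 / 4 + a) k * pp (3 / 4 + a) k * pp (1 / 4 - a) k *
        pp (3 / 4 - a) k) / (pp 1 k * pp (1 / 2) k * pp (1 - a) k * pp (1 / 2 - a) k *
        pp (1 + a) k * pp (1 / 2 + a) k) := by
    unfold hypCoeff
    rw [Fin.prod_univ_six, Fin.prod_univ_six]
    rfl
  rw [e]
  simp only [uu, Nat.cast_zero, mul_zero, add_zero, pp_double]
  rw [show (1 / 2 / 2 : ℂ) = 1 / 4 by norm_num, show ((1 / 2 + 1) / 2 : ℂ) = 3 / 4 by norm_num,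
    show (1 / 2 + 2 * a) / 2 = 1 / 4 + a by ring, show (1 / 2 + 2 * a + 1) / 2 = 3 / 4 + a by ring,
    show (1 / 2 - 2 * a) / 2 = 1 / 4 - a by ring, show (1 / 2 - 2 * a + 1) / 2 = 3 / 4 - a by ring,
    show (1 - 2 * a) / 2 = 1 / 2 - a by ring, show (1 - 2 * a + 1) / 2 = 1 - a by ring,
    show (1 + 2 * a) / 2 = 1 / 2 + a by ring, show (1 + 2 * a + 1) / 2 = 1 + a by ring,
    show ((1 + 1) / 2 : ℂ) = 1 by norm_num]
  have h4 : (4 : ℂ) ^ k * 4 ^ k * 4 ^ k ≠ 0 := by simp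
  rw [← mul_div_mul_left _ _ h4]
  congr 1 <;> ring

lemma not_np {x : ℂ} (h : ¬ IsNonposInt x) (j : ℕ) : x + j ≠ 0 := fun hj =>
  h ⟨j, by linear_combination hj⟩

lemma two_cpow : (2 : ℂ) ^ (-(1 / 2) : ℂ) = (Real.sqrt 2 : ℂ) / 2 := by
  have h : (2 : ℂ) ^ (1 / 2 : ℂ) = (Real.sqrt 2 : ℂ) := by
    rw [Real.sqrt_eq_rpow, Complex.ofReal_cpow (by norm_num)]
    norm_num
  have h2 : (Real.sqrt 2 : ℂ) * (Real.sqrt 2 : ℂ) = 2 := by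
    rw [← Complex.ofReal_mul, Real.mul_self_sqrt (by norm_num)]; norm_num
  have h3 : (Real.sqrt 2 : ℂ) ≠ 0 := by
    intro h0; rw [h0] at h2; norm_num at h2
  rw [cpow_neg, h, inv_eq_iff_eq_inv, inv_div, eq_div_iff h3, h2]

lemma gamma_refl : Gamma (1 / 4) * Gamma (3 / 4) = (Real.sqrt 2 : ℂ) * Real.pi := by
  have h := Complex.Gamma_mul_Gamma_one_sub (1 / 4)
  rw [show (1 - 1 / 4 : ℂ) = 3 / 4 by norm_num] at h
  have h2 : Complex.sin (Real.pi * (1 / 4)) = (Real.sqrt 2 : ℂ) / 2 := by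
    rw [show (Real.pi * (1 / 4) : ℂ) = ((Real.pi / 4 : ℝ) : ℂ) by push_cast; ring,
      ← Complex.ofReal_sin, Real.sin_pi_div_four]
    push_cast; rfl
  have h4 : (Real.sqrt 2 : ℂ) * (Real.sqrt 2 : ℂ) = 2 := by
    rw [← Complex.ofReal_mul, Real.mul_self_sqrt (by norm_num)]; norm_num
  have h3 : (Real.sqrt 2 : ℂ) ≠ 0 := by
    intro h0; rw [h0] at h4; norm_num at h4
  rw [h, h2]
  field_simp
  linear_combination -h4

lemma np_mid (j : ℕ) : (3 / 4 : ℂ) + j ≠ 0 := by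
  intro h
  have := congrArg Complex.re h
  simp at this
  have h2 : (0:ℝ) ≤ j := by positivity
  linarith

lemma even_tsum (t : ℕ → ℂ) (ht : Summable t) :
    ∑' k, t (2 * k) = (∑' n, t n + ∑' n, t n * (-1) ^ n) / 2 := by
  have he : Summable (fun k => t (2 * k)) :=
    ht.comp_injective (mul_right_injective₀ (two_ne_zero))
  have ho : Summable (fun k => t (2 * k + 1)) :=
    ht.comp_injective ((add_left_injective 1).comp (mul_right_injective₀ (two_ne_zero)))
  rw [← tsum_even_add_odd he ho]
  have q1 : ∀ k : ℕ, t (2 * k) * (-1) ^ (2 * k) = t (2 * k) := fun k => by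
    rw [pow_mul]; norm_num
  have q2 : ∀ k : ℕ, t (2 * k + 1) * (-1) ^ (2 * k + 1) = -t (2 * k + 1) := fun k => by
    rw [pow_succ, pow_mul]; norm_num
  rw [← tsum_even_add_odd (f := fun n => t n * (-1) ^ n) (by simpa only [q1] using he)
    (by simpa only [q2] using ho.neg)]
  simp only [q1, q2, tsum_neg]
  ring
end

theorem stmt13 (a : ℂ) (ha : ¬ ∃ k : ℤ, k ≠ 0 ∧ 2 * a = (k : ℂ))
    (h1 : ¬ IsNonposInt (3 / 4 - 2 * a)) (h2 : ¬ IsNonposInt (3 / 4 + 2 * a))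
    (h3 : ¬ IsNonposInt (a + 5 / 8)) (h4 : ¬ IsNonposInt (a + 7 / 8))
    (h5 : ¬ IsNonposInt (-a + 5 / 8)) (h6 : ¬ IsNonposInt (-a + 7 / 8)) :
    Summable (fun k : ℕ =>
      hypCoeff ![1 / 4, 3 / 4, 1 / 4 + a, 3 / 4 + a, 1 / 4 - a, 3 / 4 - a]
        ![1, 1 / 2, 1 - a, 1 / 2 - a, 1 + a, 1 / 2 + a] k * (1 : ℂ) ^ k) ∧
    cHyp ![1 / 4, 3 / 4, 1 / 4 + a, 3 / 4 + a, 1 / 4 - a, 3 / 4 - a]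
        ![1, 1 / 2, 1 - a, 1 / 2 - a, 1 + a, 1 / 2 + a] 1
      = (Gamma (1 + 2 * a) * Gamma (1 - 2 * a) / (4 * (Real.pi : ℂ))) *
          (Gamma (1 / 4) ^ 2 / (Gamma (3 / 4 - 2 * a) * Gamma (3 / 4 + 2 * a))
            + (Real.sqrt 2 : ℂ) * (Real.pi : ℂ) ^ 2
              / (Gamma (a + 5 / 8) * Gamma (a + 7 / 8)
                * Gamma (-a + 5 / 8) * Gamma (-a + 7 / 8))) := by
  have hm : ∀ j : ℕ, 1 - 2 * a + j ≠ 0 := fun j hj =>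
    ha ⟨(j : ℤ) + 1, by omega, by push_cast; linear_combination -hj⟩
  have hp : ∀ j : ℕ, 1 + 2 * a + j ≠ 0 := fun j hj =>
    ha ⟨-((j : ℤ) + 1), by omega, by push_cast; linear_combination hj⟩
  have hT := uu_summable (B := 1 / 2 + 2 * a) (C := 1 / 2 - 2 * a) hm hp (by ring) 0
  have F1 := iterate_limit hm hp (1 / 2 + 2 * a) (1 / 2 - 2 * a) (3 / 4) (3 / 4)
    (3 / 4 - 2 * a) (3 / 4 + 2 * a) np_mid np_mid (not_np h1) (not_np h2) (by ring)
    (dixon_step hm hp)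
  have F2 := iterate_limit hm hp (1 / 4) (3 / 4) (5 / 8 - 2 * a / 2) (7 / 8 - 2 * a / 2)
    (5 / 8 + 2 * a / 2) (7 / 8 + 2 * a / 2)
    (by rw [show 5 / 8 - 2 * a / 2 = -a + 5 / 8 by ring]; exact not_np h5)
    (by rw [show 7 / 8 - 2 * a / 2 = -a + 7 / 8 by ring]; exact not_np h6)
    (by rw [show 5 / 8 + 2 * a / 2 = a + 5 / 8 by ring]; exact not_np h3)
    (by rw [show 7 / 8 + 2 * a / 2 = a + 7 / 8 by ring]; exact not_np h4) (by ring)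
    (whipple_step hm hp)
  rw [show 5 / 8 - 2 * a / 2 = -a + 5 / 8 by ring, show 7 / 8 - 2 * a / 2 = -a + 7 / 8 by ring,
    show 5 / 8 + 2 * a / 2 = a + 5 / 8 by ring, show 7 / 8 + 2 * a / 2 = a + 7 / 8 by ring] at F2
  have M := minus_one hm hp
  rw [F2, two_cpow] at M
  unfold cHyp
  simp only [one_pow, mul_one, coeff_even]
  refine ⟨hT.comp_injective (mul_right_injective₀ (two_ne_zero)), ?_⟩
  rw [even_tsum _ hT, F1, M]
  have G := gamma_refl
  have s2 : (Real.sqrt 2 : ℂ) * (Real.sqrt 2 : ℂ) = 2 := by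
    rw [← Complex.ofReal_mul, Real.mul_self_sqrt (by norm_num)]; norm_num
  have hpi : (Real.pi : ℂ) ≠ 0 := by exact_mod_cast Real.pi_ne_zero
  have g34 : Gamma (3 / 4) ≠ 0 := Complex.Gamma_ne_zero fun m hm' =>
    np_mid m (by linear_combination hm')
  have G2 : Gamma (1 / 4) ^ 2 = 2 * (Real.pi : ℂ) ^ 2 / Gamma (3 / 4) ^ 2 := by
    rw [eq_div_iff (pow_ne_zero 2 g34), ← mul_pow, G, mul_pow, pow_two (Real.sqrt 2 : ℂ), s2]
  rw [G2]
  have k1 : Gamma (3 / 4 - 2 * a) ≠ 0 := Complex.Gamma_ne_zero fun m h => h1 ⟨m, h⟩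
  have k2 : Gamma (3 / 4 + 2 * a) ≠ 0 := Complex.Gamma_ne_zero fun m h => h2 ⟨m, h⟩
  have k3 : Gamma (a + 5 / 8) ≠ 0 := Complex.Gamma_ne_zero fun m h => h3 ⟨m, h⟩
  have k4 : Gamma (a + 7 / 8) ≠ 0 := Complex.Gamma_ne_zero fun m h => h4 ⟨m, h⟩
  have k5 : Gamma (-a + 5 / 8) ≠ 0 := Complex.Gamma_ne_zero fun m h => h5 ⟨m, h⟩
  have k6 : Gamma (-a + 7 / 8) ≠ 0 := Complex.Gamma_ne_zero fun m h => h6 ⟨m, h⟩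
  generalize Gamma (3 / 4 - 2 * a) = K1 at *
  generalize Gamma (3 / 4 + 2 * a) = K2 at *
  generalize Gamma (a + 5 / 8) = K3 at *
  generalize Gamma (a + 7 / 8) = K4 at *
  generalize Gamma (-a + 5 / 8) = K5 at *
  generalize Gamma (-a + 7 / 8) = K6 at *
  generalize Gamma (3 / 4) = K7 at *
  generalize (Real.sqrt 2 : ℂ) = s at *
  field_simp
  ring
end
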